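/- arXiv:quant-ph/0409016 — 2 statements merged into one kernel-verified Lean document; each statement's English description precedes it below -/
import Mathlib

section
/- For every density operator ρ^{AB} on ℂ^m ⊗ ℂ^n with marginals ρ^A and ρ^B, there exists a sequence of triples of partitions (λ_j, μ_j, ν_j) with |λ_j| = |μ_j| = |ν_j| and g_{λ_j μ_j ν_j} ≠ 0 for all j, such that λ_j/|λ_j| → spec(ρ^{AB}), μ_j/|μ_j| → spec(ρ^A), and ν_j/|ν_j| → spec(ρ^B). -/
open Finset Nat

noncomputable section

/-- The cells of the Young diagram of `lam` (row and column indices below `k`). -/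
def youngCells (k : ℕ) (lam : ℕ → ℕ) : Finset (ℕ × ℕ) :=
  (range k ×ˢ range k).filter fun c => c.2 < lam c.1

/-- `lam` is a partition of `k`: a weakly decreasing sequence of naturals summing to `k`
(supported on the first `k` entries). -/
def IsPartitionOf (k : ℕ) (lam : ℕ → ℕ) : Prop :=
  Antitone lam ∧ (∀ i, k ≤ i → lam i = 0) ∧ ∑ i ∈ range k, lam i = k

/-- The Young symmetry operator `e(T)` in the group algebra `ℂ[S_k]`, for a tableau given by
a numbering `t : Fin k → ℕ × ℕ` of the boxes: the signed sum over the column group times the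
sum over the row group. -/
def youngSym (k : ℕ) (t : Fin k → ℕ × ℕ) : MonoidAlgebra ℂ (Equiv.Perm (Fin k)) :=
  (∑ π ∈ univ.filter (fun π : Equiv.Perm (Fin k) => ∀ j, (t (π j)).2 = (t j).2),
      MonoidAlgebra.single π ((Equiv.Perm.sign π : ℤ) : ℂ)) *
    ∑ π ∈ univ.filter (fun π : Equiv.Perm (Fin k) => ∀ j, (t (π j)).1 = (t j).1),
      MonoidAlgebra.single π (1 : ℂ)

/-- The left ideal `ℂ[S_k]·e(T)` generated by the Young symmetry operator of the tableau `t`;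
it carries the irreducible representation `U_lam` of `S_k` for `lam` the shape of `t`. -/
def youngIdeal (k : ℕ) (t : Fin k → ℕ × ℕ) :
    Submodule ℂ (MonoidAlgebra ℂ (Equiv.Perm (Fin k))) :=
  LinearMap.range (LinearMap.mulRight ℂ (youngSym k t))

/-- The value at `π` of the character of the representation of `S_k` on the left ideal
`ℂ[S_k]·e(T)`, i.e. the trace of left multiplication by `π` on this ideal.  For `t` a
tableau of shape `lam ⊢ k` this is the irreducible character `χ_lam(π)`. -/
def youngIdealChar (k : ℕ) (t : Fin k → ℕ × ℕ) (π : Equiv.Perm (Fin k)) : ℂ :=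
  LinearMap.trace ℂ (youngIdeal k t)
    ((LinearMap.mulLeft ℂ (MonoidAlgebra.single π (1 : ℂ))).restrict
      (fun x hx => by
        obtain ⟨a, rfl⟩ := hx
        exact ⟨MonoidAlgebra.single π (1 : ℂ) * a, by
          simp only [LinearMap.mulRight_apply, LinearMap.mulLeft_apply, mul_assoc]⟩))

/-- `chi` is the family of irreducible characters of the symmetric groups: `chi k lam` is the
character of the irreducible representation of `S_k` indexed by the partition `lam ⊢ k`,
realised on the left ideal generated by the Young symmetry operator of any tableau of
shape `lam`. -/
def IsCharacterFamily (chi : (k : ℕ) → (ℕ → ℕ) → Equiv.Perm (Fin k) → ℂ) : Prop :=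
  ∀ (k : ℕ) (lam : ℕ → ℕ), IsPartitionOf k lam →
    ∀ t : Fin k → ℕ × ℕ, Set.BijOn t Set.univ ↑(youngCells k lam) →
      ∀ π, chi k lam π = youngIdealChar k t π

/-- `g` is the family of Kronecker coefficients associated to the character family `chi`:
`g k lam mu nu` is the multiplicity of `U_lam` in `U_mu ⊗ U_nu`, given by
`(1/k!) Σ_{π ∈ S_k} χ_lam(π) χ_mu(π) χ_nu(π)`. -/
def IsKroneckerFamily (chi : (k : ℕ) → (ℕ → ℕ) → Equiv.Perm (Fin k) → ℂ)
    (g : (k : ℕ) → (ℕ → ℕ) → (ℕ → ℕ) → (ℕ → ℕ) → ℕ) : Prop :=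
  ∀ (k : ℕ) (lam mu nu : ℕ → ℕ), IsPartitionOf k lam → IsPartitionOf k mu →
    IsPartitionOf k nu →
      (g k lam mu nu : ℂ) = (k ! : ℂ)⁻¹ * ∑ π : Equiv.Perm (Fin k),
        chi k lam π * chi k mu π * chi k nu π

section part1
open Matrix ComplexOrder
set_option linter.unusedSectionVars false
set_option linter.unusedSimpArgs false
namespace Kron

section toMat
variable {G X : Type} [Group G] [Fintype G] [DecidableEq G] [Fintype X] [DecidableEq X]

/-- expansion of a group algebra element -/
lemma ma_expand (x : MonoidAlgebra ℂ G) :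
    x = ∑ g, x.coeff g • MonoidAlgebra.single g (1 : ℂ) := by
  ext h
  simp [MonoidAlgebra.coeff_sum, Finsupp.single_apply]

/-- permutation matrices of an action -/
def pmat (act : G →* Equiv.Perm X) : G →* Matrix X X ℂ where
  toFun g := Matrix.of fun u v => if act g v = u then 1 else 0
  map_one' := by
    ext u v
    simp [Matrix.one_apply, eq_comm]
  map_mul' g h := by
    ext u v
    simp [Matrix.mul_apply]

def toMat (act : G →* Equiv.Perm X) : MonoidAlgebra ℂ G →ₐ[ℂ] Matrix X X ℂ :=
  MonoidAlgebra.lift ℂ _ G (pmat act)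

lemma toMat_single (act : G →* Equiv.Perm X) (g : G) (c : ℂ) (u v : X) :
    toMat act (MonoidAlgebra.single g c) u v = if act g v = u then c else 0 := by
  simp [toMat, pmat, MonoidAlgebra.lift_single]

lemma toMat_apply (act : G →* Equiv.Perm X) (x : MonoidAlgebra ℂ G) (u v : X) :
    toMat act x u v = ∑ g, if act g v = u then x.coeff g else 0 := by
  conv_lhs => rw [ma_expand x]
  simp only [map_sum, Matrix.sum_apply, map_smul, Matrix.smul_apply, toMat_single]
  simp

/-- self-adjointness of coefficients -/
def SA (x : MonoidAlgebra ℂ G) : Prop := ∀ g, x.coeff g⁻¹ = (starRingEnd ℂ) (x.coeff g)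

lemma SA.toMat {x : MonoidAlgebra ℂ G} (h : SA x) (act : G →* Equiv.Perm X) :
    (toMat act x).IsHermitian := by
  ext u v
  rw [Matrix.conjTranspose_apply, toMat_apply, toMat_apply, star_sum]
  rw [← Equiv.sum_comp (Equiv.inv G)]
  refine Finset.sum_congr rfl fun g _ => ?_
  simp only [Equiv.inv_apply, map_inv, h g, Equiv.Perm.inv_eq_iff_eq]
  by_cases h : act g v = u
  · simp [h]
  · simp [h, Ne.symm h]

lemma toMat_map {G' : Type} [Group G'] [Fintype G'] [DecidableEq G']
    (act : G →* Equiv.Perm X) (f : G' →* G) (x : MonoidAlgebra ℂ G') :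
    toMat act (MonoidAlgebra.mapDomainAlgHom ℂ ℂ f x) = toMat (act.comp f) x := by
  have : (toMat act).comp (MonoidAlgebra.mapDomainAlgHom ℂ ℂ f) = toMat (act.comp f) := by
    ext g u v
    simp [toMat_single]
  exact DFunLike.congr_fun this x

/-- regular action -/
def reg (G : Type) [Group G] : G →* Equiv.Perm G := MulAction.toPermHom G G

lemma toMat_reg (x : MonoidAlgebra ℂ G) (u v : G) : toMat (reg G) x u v = x.coeff (u * v⁻¹) := by
  rw [toMat_apply]
  simp [reg, ← eq_mul_inv_iff_mul_eq]

lemma trace_reg (x : MonoidAlgebra ℂ G) :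
    (toMat (reg G) x).trace = (Fintype.card G : ℂ) * x.coeff 1 := by
  simp [Matrix.trace, toMat_reg]

lemma toMat_reg_inj {x : MonoidAlgebra ℂ G} (h : toMat (reg G) x = 0) : x = 0 := by
  ext g
  have := toMat_reg x g 1
  rw [h] at this
  simpa using this.symm

lemma coeff_mul_fin (x y : MonoidAlgebra ℂ G) (g : G) :
    (x * y).coeff g = ∑ h, x.coeff h * y.coeff (h⁻¹ * g) := by
  have h1 := toMat_reg (x * y) g 1
  rw [map_mul, Matrix.mul_apply] at h1
  simp only [toMat_reg, inv_one, mul_one] at h1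
  rw [← h1, ← Equiv.sum_comp ((Equiv.inv G).trans (Equiv.mulRight g))]
  refine Finset.sum_congr rfl fun h _ => ?_
  simp

lemma coeff_mul_one_comm (x y : MonoidAlgebra ℂ G) : (x * y).coeff 1 = (y * x).coeff 1 := by
  rw [coeff_mul_fin, coeff_mul_fin, ← Equiv.sum_comp (Equiv.inv G)]
  refine Finset.sum_congr rfl fun h _ => ?_
  simp [mul_comm]

/-- Hermitian idempotents have diagonal entries sums of squares -/
lemma herm_idem_diag {M : Matrix X X ℂ} (h : M.IsHermitian) (hi : M * M = M) (u : X) :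
    M u u = ((∑ v, ‖M u v‖ ^ 2 : ℝ) : ℂ) := by
  conv_lhs => rw [← hi, Matrix.mul_apply]
  push_cast
  refine Finset.sum_congr rfl fun v _ => ?_
  rw [← h.apply v u, ← Complex.mul_conj']; rfl

lemma herm_idem_zero {M : Matrix X X ℂ} (h : M.IsHermitian) (hi : M * M = M)
    (ht : M.trace = 0) : M = 0 := by
  have : (Mᴴ * M).trace = 0 := by rw [h.eq, hi, ht]
  exact Matrix.trace_conjTranspose_mul_self_eq_zero_iff.1 this

lemma idem_trace (M : Matrix X X ℂ) (hi : M * M = M) : M.trace = (M.rank : ℂ) := by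
  have h : IsIdempotentElem (Matrix.toLin' M) := by
    show Matrix.toLin' M * Matrix.toLin' M = _
    rw [Module.End.mul_eq_comp, ← Matrix.toLin'_mul, hi]
  have h2 := (LinearMap.IsIdempotentElem.isProj_range _ h).trace
  rw [Matrix.trace_toLin'_eq] at h2
  rw [h2]
  rfl

lemma idem_trace_le {M N : Matrix X X ℂ} (hM : M * M = M) (hN : N * N = N) (B : Matrix X X ℂ)
    (h : M = B * N) : M.trace.re ≤ N.trace.re := by
  rw [idem_trace M hM, idem_trace N hN, Complex.natCast_re, Complex.natCast_re, Nat.cast_le, h]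
  exact Matrix.rank_mul_le_right _ _
end toMat

end Kron
end part1

section part2
open Matrix ComplexOrder
set_option linter.unusedSectionVars false
set_option linter.unusedSimpArgs false
namespace Kron

/-- the group algebra of `S_k` -/
abbrev GA (k : ℕ) := MonoidAlgebra ℂ (Equiv.Perm (Fin k))

def sg {k : ℕ} (π : Equiv.Perm (Fin k)) : GA k := MonoidAlgebra.single π 1

lemma sg_mul {k : ℕ} (π τ : Equiv.Perm (Fin k)) : sg π * sg τ = sg (π * τ) := by
  simp [sg, MonoidAlgebra.single_mul_single]

lemma sg_one {k : ℕ} : sg (1 : Equiv.Perm (Fin k)) = 1 := rfl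

def rowSet (k : ℕ) (t : Fin k → ℕ × ℕ) : Finset (Equiv.Perm (Fin k)) :=
  univ.filter (fun π : Equiv.Perm (Fin k) => ∀ j, (t (π j)).1 = (t j).1)
def colSet (k : ℕ) (t : Fin k → ℕ × ℕ) : Finset (Equiv.Perm (Fin k)) :=
  univ.filter (fun π : Equiv.Perm (Fin k) => ∀ j, (t (π j)).2 = (t j).2)
def rowS (k : ℕ) (t : Fin k → ℕ × ℕ) : GA k := ∑ π ∈ rowSet k t, sg π
def colS (k : ℕ) (t : Fin k → ℕ × ℕ) : GA k :=
  ∑ π ∈ colSet k t, MonoidAlgebra.single π ((Equiv.Perm.sign π : ℤ) : ℂ)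

lemma youngSym_eq (k : ℕ) (t : Fin k → ℕ × ℕ) : youngSym k t = colS k t * rowS k t := rfl

variable {k : ℕ} {lam mu : ℕ → ℕ} {t s : Fin k → ℕ × ℕ}

lemma mem_rowSet {π} : π ∈ rowSet k t ↔ ∀ j, (t (π j)).1 = (t j).1 := by simp [rowSet]
lemma mem_colSet {π} : π ∈ colSet k t ↔ ∀ j, (t (π j)).2 = (t j).2 := by simp [colSet]

lemma rowSet_mul {π τ} (h : π ∈ rowSet k t) : τ * π ∈ rowSet k t ↔ τ ∈ rowSet k t := by
  simp only [mem_rowSet, Equiv.Perm.mul_apply] at *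
  constructor
  · intro h' j
    have := h' (π⁻¹ j)
    rw [← h (π⁻¹ j)] at this
    simpa using this
  · intro h' j; rw [h', h]

lemma mul_rowSet {π τ} (h : π ∈ rowSet k t) : π * τ ∈ rowSet k t ↔ τ ∈ rowSet k t := by
  simp only [mem_rowSet, Equiv.Perm.mul_apply, mem_rowSet.1 h] at *

lemma mul_colSet {π τ} (h : π ∈ colSet k t) : π * τ ∈ colSet k t ↔ τ ∈ colSet k t := by
  simp only [mem_colSet, Equiv.Perm.mul_apply, mem_colSet.1 h] at *

lemma colSet_mul {π τ} (h : π ∈ colSet k t) : τ * π ∈ colSet k t ↔ τ ∈ colSet k t := by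
  simp only [mem_colSet, Equiv.Perm.mul_apply] at *
  constructor
  · intro h' j
    have := h' (π⁻¹ j)
    rw [← h (π⁻¹ j)] at this
    simpa using this
  · intro h' j; rw [h', h]

lemma sg_rowS {π} (h : π ∈ rowSet k t) : sg π * rowS k t = rowS k t := by
  simp only [rowS, Finset.mul_sum, sg_mul]
  exact Finset.sum_equiv (Equiv.mulLeft π) (fun τ => by simp [mul_rowSet h]) (fun τ _ => by simp)

lemma rowS_sg {π} (h : π ∈ rowSet k t) : rowS k t * sg π = rowS k t := by
  simp only [rowS, Finset.sum_mul, sg_mul]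
  exact Finset.sum_equiv (Equiv.mulRight π) (fun τ => by simp [rowSet_mul h]) (fun τ _ => by simp)

lemma sign_sq (π : Equiv.Perm (Fin k)) :
    ((Equiv.Perm.sign π : ℤ) : ℂ) * ((Equiv.Perm.sign π : ℤ) : ℂ) = 1 := by
  rcases Int.units_eq_one_or (Equiv.Perm.sign π) with h | h <;> simp [h]

lemma sg_colS {π} (h : π ∈ colSet k t) :
    sg π * colS k t = ((Equiv.Perm.sign π : ℤ) : ℂ) • colS k t := by
  simp only [colS, Finset.mul_sum, Finset.smul_sum, sg, MonoidAlgebra.single_mul_single,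
    MonoidAlgebra.smul_single, smul_eq_mul]
  refine Finset.sum_equiv (Equiv.mulLeft π) (fun τ => by simp [mul_colSet h]) (fun τ _ => ?_)
  simp [← mul_assoc, sign_sq]

lemma colS_sg {π} (h : π ∈ colSet k t) :
    colS k t * sg π = ((Equiv.Perm.sign π : ℤ) : ℂ) • colS k t := by
  simp only [colS, Finset.sum_mul, Finset.smul_sum, sg, MonoidAlgebra.single_mul_single,
    MonoidAlgebra.smul_single, smul_eq_mul]
  refine Finset.sum_equiv (Equiv.mulRight π) (fun τ => by simp [colSet_mul h]) (fun τ _ => ?_)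
  simp
  rw [mul_left_comm, sign_sq, mul_one]

lemma swap_row {i j : Fin k} (h : (t i).1 = (t j).1) : Equiv.swap i j ∈ rowSet k t := by
  rw [mem_rowSet]
  intro l
  rcases Equiv.swap_apply_def i j l with h'
  rw [h']; split_ifs with h1 h2
  · rw [h1, h]
  · rw [h2, h]
  · rfl

lemma swap_col {i j : Fin k} (h : (t i).2 = (t j).2) : Equiv.swap i j ∈ colSet k t := by
  rw [mem_colSet]
  intro l
  rcases Equiv.swap_apply_def i j l with h'
  rw [h']; split_ifs with h1 h2
  · rw [h1, h]
  · rw [h2, h]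
  · rfl

lemma ga_self_eq_neg {x : GA k} (h : x = -x) : x = 0 := by
  have h2 : (2 : ℂ) • x = 0 := by
    rw [two_smul]; nth_rw 2 [h]; simp
  exact (smul_eq_zero.1 h2).resolve_left two_ne_zero

/-- `b_s σ a_t = 0` if `σ` maps two elements of a row of `t` into a column of `s`. -/
lemma col_sg_row_zero (σ : Equiv.Perm (Fin k)) {i j : Fin k} (hij : i ≠ j)
    (hr : (t i).1 = (t j).1) (hc : (s (σ i)).2 = (s (σ j)).2) :
    colS k s * sg σ * rowS k t = 0 := by
  have h1 : colS k s * sg σ * rowS k t = - (colS k s * sg σ * rowS k t) := by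
    conv_lhs => rw [← sg_rowS (swap_row hr)]
    rw [← mul_assoc, mul_assoc (colS k s), sg_mul,
      show σ * Equiv.swap i j = Equiv.swap (σ i) (σ j) * σ by
        rw [Equiv.mul_swap_eq_swap_mul], ← sg_mul, ← mul_assoc, colS_sg (swap_col hc),
      Equiv.Perm.sign_swap (fun h => hij (σ.injective h))]
    simp
  exact ga_self_eq_neg h1

lemma row_sg_col_zero (σ : Equiv.Perm (Fin k)) {i j : Fin k} (hij : i ≠ j)
    (hr : (t i).1 = (t j).1) (hc : (s (σ i)).2 = (s (σ j)).2) :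
    rowS k t * sg σ⁻¹ * colS k s = 0 := by
  have h1 : rowS k t * sg σ⁻¹ * colS k s = - (rowS k t * sg σ⁻¹ * colS k s) := by
    conv_lhs => rw [← rowS_sg (swap_row hr)]
    rw [mul_assoc (rowS k t), sg_mul,
      show Equiv.swap i j * σ⁻¹ = σ⁻¹ * Equiv.swap (σ i) (σ j) by
        rw [Equiv.mul_swap_eq_swap_mul]; simp, ← sg_mul, ← mul_assoc, mul_assoc _ _ (colS k s),
          sg_colS (swap_col hc),
      Equiv.Perm.sign_swap (fun h => hij (σ.injective h))]
    simp
  exact ga_self_eq_neg h1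

/-- `t` is a tableau of shape `lam ⊢ k` -/
structure Tab (k : ℕ) (lam : ℕ → ℕ) (t : Fin k → ℕ × ℕ) : Prop where
  part : IsPartitionOf k lam
  bij : Set.BijOn t Set.univ ↑(youngCells k lam)

lemma Tab.inj (h : Tab k lam t) : Function.Injective t := Set.injOn_univ.1 h.bij.injOn

lemma Tab.lt (h : Tab k lam t) (j : Fin k) :
    (t j).1 < k ∧ (t j).2 < k ∧ (t j).2 < lam (t j).1 := by
  have := h.bij.mapsTo (Set.mem_univ j)
  simpa [youngCells, and_assoc] using this

lemma part_le (h : IsPartitionOf k lam) (i : ℕ) : lam i ≤ k := by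
  by_cases hi : i < k
  · calc lam i ≤ ∑ i ∈ range k, lam i :=
        Finset.single_le_sum (f := lam) (fun _ _ => Nat.zero_le _) (by simpa using hi)
      _ = k := h.2.2
  · rw [h.2.1 i (by omega)]; omega

lemma Tab.surj (h : Tab k lam t) {r c : ℕ} (hc : c < lam r) : ∃ j, t j = (r, c) := by
  have hr : r < k := by
    by_contra h'
    rw [h.part.2.1 r (by omega)] at hc
    omega
  have : (r, c) ∈ (↑(youngCells k lam) : Set (ℕ × ℕ)) := by
    have := part_le h.part r
    simp [youngCells, hr, hc]; omega
  obtain ⟨j, -, hj⟩ := h.bij.surjOn this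
  exact ⟨j, hj⟩

lemma Tab.card_row_col (h : Tab k lam t) (i N : ℕ) :
    (univ.filter fun j => (t j).1 = i ∧ (t j).2 < N).card = min (lam i) N := by
  rw [← Finset.card_range (min (lam i) N)]
  refine Finset.card_bij (fun j _ => (t j).2) ?_ ?_ ?_
  · intro j hj
    simp only [Finset.mem_filter, Finset.mem_univ, true_and] at hj
    have := h.lt j
    rw [hj.1] at this
    simp; omega
  · intro j hj j' hj' e
    simp only [Finset.mem_filter, Finset.mem_univ, true_and] at hj hj'
    exact h.inj (Prod.ext (hj.1.trans hj'.1.symm) e)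
  · intro c hc
    simp only [Finset.mem_range, lt_min_iff] at hc
    obtain ⟨j, hj⟩ := h.surj hc.1
    exact ⟨j, by simp [hj, hc.2], by simp [hj]⟩

lemma Tab.card_row (h : Tab k lam t) (i : ℕ) :
    (univ.filter fun j => (t j).1 = i).card = lam i := by
  have := h.card_row_col i (lam i)
  rw [min_self] at this
  rw [← this]
  congr 1
  ext j
  have hj := h.lt j
  simp only [Finset.mem_filter, Finset.mem_univ, true_and]
  constructor
  · rintro rfl; exact ⟨rfl, hj.2.2⟩
  · exact fun h => h.1

lemma Tab.card_col_lt (h : Tab k lam t) (N : ℕ) :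
    (univ.filter fun j => (t j).2 < N).card = ∑ i ∈ range k, min (lam i) N := by
  rw [Finset.card_eq_sum_card_fiberwise (f := fun j => (t j).1) (t := range k)]
  · refine Finset.sum_congr rfl fun i _ => ?_
    rw [Finset.filter_filter, ← h.card_row_col i N]
    congr 1
    ext j; simp [and_comm]
  · intro j _
    simpa using (h.lt j).1

lemma fill_le (ht : Tab k lam t) (σ : Equiv.Perm (Fin k))
    (hσ : ∀ i j, i ≠ j → (t i).1 = (t j).1 → (s (σ i)).2 ≠ (s (σ j)).2) (i N : ℕ) :
    (univ.filter fun j => (t j).1 = i ∧ (s (σ j)).2 < N).card ≤ min (lam i) N := by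
  refine le_min ?_ ?_
  · rw [← ht.card_row i]
    exact Finset.card_le_card fun j => by simp +contextual
  · rw [← Finset.card_range N]
    refine Finset.card_le_card_of_injOn (fun j => (s (σ j)).2) ?_ ?_
    · intro j hj; simp at hj ⊢; exact hj.2
    · intro j hj j' hj' e
      simp only [Finset.coe_filter, Finset.mem_univ, true_and, Set.mem_ofPred_eq] at hj hj'
      by_contra hne
      exact hσ j j' hne (hj.1.trans hj'.1.symm) e

lemma fill_sum (ht : Tab k lam t) (hs : Tab k mu s) (σ : Equiv.Perm (Fin k)) (N : ℕ) :
    ∑ i ∈ range k, (univ.filter fun j => (t j).1 = i ∧ (s (σ j)).2 < N).card =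
      ∑ i ∈ range k, min (mu i) N := by
  rw [← hs.card_col_lt N]
  have : (univ.filter fun j => (s j).2 < N).card = (univ.filter fun j => (s (σ j)).2 < N).card := by
    refine (Finset.card_equiv σ fun j => by simp).symm
  rw [this, Finset.card_eq_sum_card_fiberwise (f := fun j => (t j).1) (t := range k)]
  · refine Finset.sum_congr rfl fun i _ => ?_
    rw [Finset.filter_filter]
    congr 1
    ext j; simp [and_comm]
  · intro j _
    simpa using (ht.lt j).1

lemma dom_of_fill (ht : Tab k lam t) (hs : Tab k mu s) (σ : Equiv.Perm (Fin k))
    (hσ : ∀ i j, i ≠ j → (t i).1 = (t j).1 → (s (σ i)).2 ≠ (s (σ j)).2) (N : ℕ) :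
    ∑ i ∈ range k, min (mu i) N ≤ ∑ i ∈ range k, min (lam i) N := by
  rw [← fill_sum ht hs σ N]
  exact Finset.sum_le_sum fun i _ => fill_le ht σ hσ i N

lemma fill_eq (ht : Tab k lam t) (σ : Equiv.Perm (Fin k))
    (hσ : ∀ i j, i ≠ j → (t i).1 = (t j).1 → (t (σ i)).2 ≠ (t (σ j)).2) (j : Fin k) :
    (t (σ j)).2 < lam (t j).1 := by
  set N := lam (t j).1 with hN
  have h1 := (Finset.sum_eq_sum_iff_of_le (s := range k)
    (fun i _ => fill_le ht σ hσ i N)).1 (fill_sum ht ht σ N) (t j).1 (by simpa using (ht.lt j).1)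
  rw [← hN, min_self] at h1
  have h2 := Finset.eq_of_subset_of_card_le
    (s := univ.filter fun l => (t l).1 = (t j).1 ∧ (t (σ l)).2 < N)
    (t := univ.filter fun l => (t l).1 = (t j).1) (fun l => by simp +contextual)
    (by rw [ht.card_row]; exact h1.ge)
  have h3 : j ∈ univ.filter fun l => (t l).1 = (t j).1 := by simp
  rw [← h2] at h3
  simpa using h3

/-- `b A a = ℂ e` -/
lemma col_row_scalar (ht : Tab k lam t) (x : GA k) :
    ∃ c : ℂ, colS k t * x * rowS k t = c • youngSym k t := by
  have key : ∀ σ, ∃ c : ℂ, colS k t * sg σ * rowS k t = c • youngSym k t := by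
    intro σ
    by_cases hσ : ∀ i j, i ≠ j → (t i).1 = (t j).1 → (t (σ i)).2 ≠ (t (σ j)).2
    · choose p hp using fun j => ht.surj (fill_eq ht σ hσ j)
      have hinj : Function.Injective p := by
        intro i j hij
        have h1 := hp i
        rw [hij, hp j, Prod.mk.injEq] at h1
        by_contra hne
        exact hσ i j hne h1.1.symm h1.2.symm
      let P : Equiv.Perm (Fin k) := Equiv.ofBijective p (Finite.injective_iff_bijective.1 hinj)
      have hP : ∀ j, P j = p j := fun j => rfl
      have hPr : P ∈ rowSet k t := by rw [mem_rowSet]; intro j; rw [hP, hp]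
      have hQ : σ * P⁻¹ ∈ colSet k t := by
        rw [mem_colSet]; intro j
        have := hp (P⁻¹ j)
        rw [← hP] at this
        rw [show P (P⁻¹ j) = j by simp] at this
        rw [this]; rfl
      refine ⟨((Equiv.Perm.sign (σ * P⁻¹) : ℤ) : ℂ), ?_⟩
      have e1 : sg σ = sg (σ * P⁻¹) * sg P := by rw [sg_mul]; simp
      rw [e1, ← mul_assoc, colS_sg hQ, mul_assoc, sg_rowS hPr, smul_mul_assoc, youngSym_eq]
    · push Not at hσ
      obtain ⟨i, j, hij, hr, hc⟩ := hσ
      exact ⟨0, by rw [col_sg_row_zero σ hij hr hc]; simp⟩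
  choose c hc using key
  refine ⟨∑ σ, x.coeff σ * c σ, ?_⟩
  conv_lhs => rw [ma_expand x]
  rw [Finset.mul_sum, Finset.sum_mul, Finset.sum_smul]
  refine Finset.sum_congr rfl fun σ _ => ?_
  rw [mul_smul_comm, smul_mul_assoc, mul_smul, ← hc σ]; rfl

lemma young_scalar (ht : Tab k lam t) (x : GA k) :
    ∃ c : ℂ, youngSym k t * x * youngSym k t = c • youngSym k t := by
  obtain ⟨c, hc⟩ := col_row_scalar ht (rowS k t * x * colS k t)
  exact ⟨c, by rw [← hc, youngSym_eq]; simp only [mul_assoc]⟩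

lemma shape_eq (hl : IsPartitionOf k lam) (hm : IsPartitionOf k mu)
    (h : ∀ N, ∑ i ∈ range k, min (mu i) N = ∑ i ∈ range k, min (lam i) N) : lam = mu := by
  -- the conjugate partition is the discrete derivative
  have hcard : ∀ N, ((range k).filter fun i => N < mu i).card =
      ((range k).filter fun i => N < lam i).card := by
    intro N
    have step : ∀ nu : ℕ → ℕ, ∑ i ∈ range k, min (nu i) (N + 1) =
        ∑ i ∈ range k, min (nu i) N + ((range k).filter fun i => N < nu i).card := by
      intro nu
      rw [Finset.card_filter, ← Finset.sum_add_distrib]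
      refine Finset.sum_congr rfl fun i _ => ?_
      split_ifs <;> omega
    have h1 := h (N + 1)
    rw [step, step, h N] at h1
    omega
  have hset : ∀ nu : ℕ → ℕ, IsPartitionOf k nu → ∀ N i, N < nu i ↔
      i < ((range k).filter fun i => N < nu i).card := by
    intro nu hnu N i
    have hex : ∃ l, nu l ≤ N := ⟨k, by rw [hnu.2.1 k le_rfl]; omega⟩
    have h1 : ∀ i, N < nu i ↔ i < Nat.find hex := by
      intro i
      constructor
      · intro hi
        by_contra hc
        have := hnu.1 (not_lt.1 hc)
        have := Nat.find_spec hex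
        omega
      · intro hi
        exact not_le.1 (Nat.find_min hex hi)
    have h2 : ((range k).filter fun i => N < nu i) = range (Nat.find hex) := by
      ext i
      simp only [Finset.mem_filter, Finset.mem_range, h1]
      have : Nat.find hex ≤ k := Nat.find_min' hex (by rw [hnu.2.1 k le_rfl]; omega)
      omega
    rw [h2, Finset.card_range, h1]
  funext i
  refine le_antisymm ?_ ?_
  · by_contra hc
    have := (hset lam hl _ i).1 (not_le.1 hc)
    rw [← hcard, ← hset mu hm] at this
    omega
  · by_contra hc
    have := (hset mu hm _ i).1 (not_le.1 hc)
    rw [hcard, ← hset lam hl] at this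
    omega

lemma row_col_zero {x : GA k}
    (h : ∀ σ, rowS k t * sg σ⁻¹ * colS k s = 0) : rowS k t * x * colS k s = 0 := by
  rw [ma_expand x, Finset.mul_sum, Finset.sum_mul]
  refine Finset.sum_eq_zero fun σ _ => ?_
  have := h σ⁻¹
  rw [inv_inv] at this
  rw [mul_smul_comm, smul_mul_assoc]
  exact (congrArg _ this).trans (smul_zero _)

lemma young_ortho (ht : Tab k lam t) (hs : Tab k mu s) (hne : lam ≠ mu) :
    (∀ x, youngSym k t * x * youngSym k s = 0) ∨ (∀ x, youngSym k s * x * youngSym k t = 0) := by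
  by_contra hcon
  push Not at hcon
  obtain ⟨⟨x, hx⟩, ⟨y, hy⟩⟩ := hcon
  have gen : ∀ {lam mu : ℕ → ℕ} {t s : Fin k → ℕ × ℕ} (ht : Tab k lam t) (hs : Tab k mu s)
      (x : GA k) (hx : youngSym k t * x * youngSym k s ≠ 0) (N : ℕ),
      ∑ i ∈ range k, min (mu i) N ≤ ∑ i ∈ range k, min (lam i) N := by
    intro lam mu t s ht hs x hx N
    by_contra hN
    refine hx ?_
    have : rowS k t * x * colS k s = 0 := by
      refine row_col_zero fun σ => ?_
      by_cases hσ : ∀ i j, i ≠ j → (t i).1 = (t j).1 → (s (σ i)).2 ≠ (s (σ j)).2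
      · exact absurd (dom_of_fill ht hs σ hσ N) hN
      · push Not at hσ
        obtain ⟨i, j, hij, hr, hc⟩ := hσ
        exact row_sg_col_zero σ hij hr hc
    rw [youngSym_eq, youngSym_eq,
      show colS k t * rowS k t * x * (colS k s * rowS k s) =
        colS k t * (rowS k t * x * colS k s) * rowS k s by simp only [mul_assoc], this]
    simp
  exact hne (shape_eq ht.part hs.part fun N =>
    le_antisymm (gen ht hs x hx N) (gen hs ht y hy N))

end Kron
end part2

section part3
open Matrix ComplexOrder
set_option linter.unusedSectionVars false
set_option linter.unusedSimpArgs false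
namespace Kron
variable {k : ℕ} {lam mu : ℕ → ℕ} {t s : Fin k → ℕ × ℕ}

lemma young_coeff (t : Fin k → ℕ × ℕ) (g : Equiv.Perm (Fin k)) :
    (youngSym k t).coeff g = ∑ q ∈ colSet k t, ∑ p ∈ rowSet k t,
      if q * p = g then ((Equiv.Perm.sign q : ℤ) : ℂ) else 0 := by
  rw [youngSym_eq, colS, rowS, Finset.sum_mul_sum]
  simp [sg, MonoidAlgebra.single_mul_single, MonoidAlgebra.coeff_sum, Finsupp.single_apply]

lemma young_real (t : Fin k → ℕ × ℕ) (g : Equiv.Perm (Fin k)) :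
    (starRingEnd ℂ) ((youngSym k t).coeff g) = (youngSym k t).coeff g := by
  rw [young_coeff]
  simp only [map_sum]
  refine Finset.sum_congr rfl fun q _ => Finset.sum_congr rfl fun p _ => ?_
  split_ifs <;> simp

lemma one_mem_row : (1 : Equiv.Perm (Fin k)) ∈ rowSet k t := by simp [mem_rowSet]
lemma one_mem_col : (1 : Equiv.Perm (Fin k)) ∈ colSet k t := by simp [mem_colSet]

lemma young_one (ht : Tab k lam t) : (youngSym k t).coeff 1 = 1 := by
  rw [young_coeff, Finset.sum_eq_single 1, Finset.sum_eq_single 1]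
  · simp
  · intro p _ hp; simp [hp]
  · intro h; exact absurd one_mem_row h
  · intro q hq hq1
    refine Finset.sum_eq_zero fun p hp => ?_
    rw [if_neg]
    intro h
    apply hq1
    have hp' : q⁻¹ = p := inv_eq_of_mul_eq_one_right h
    have hqr : q ∈ rowSet k t := by
      have := (rowSet_mul (τ := q) hp).1 (by rw [h]; exact one_mem_row)
      exact this
    ext j
    have : q j = j := ht.inj (Prod.ext (mem_rowSet.1 hqr j) (mem_colSet.1 hq j))
    simp [this]
  · intro h; exact absurd one_mem_col h

/-- `e² = n e` -/
def yn (k : ℕ) (t : Fin k → ℕ × ℕ) : ℂ := (youngSym k t * youngSym k t).coeff 1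

lemma young_sq (ht : Tab k lam t) :
    youngSym k t * youngSym k t = yn k t • youngSym k t := by
  obtain ⟨c, hc⟩ := young_scalar ht 1
  rw [mul_one] at hc
  rw [yn, hc]
  simp [young_one ht]

lemma yn_ne (ht : Tab k lam t) : yn k t ≠ 0 := by
  intro h0
  have h := young_sq ht
  rw [h0, zero_smul] at h
  have hnil : IsNilpotent (toMat (reg _) (youngSym k t)) := ⟨2, by rw [pow_two, ← map_mul, h, map_zero]⟩
  have := (Matrix.isNilpotent_trace_of_isNilpotent hnil).eq_zero
  rw [trace_reg, young_one ht] at this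
  simp [Nat.factorial_ne_zero] at this

def yp (k : ℕ) (t : Fin k → ℕ × ℕ) : GA k := (yn k t)⁻¹ • youngSym k t

lemma young_eq_yp (ht : Tab k lam t) : youngSym k t = yn k t • yp k t := by
  rw [yp, smul_smul, mul_inv_cancel₀ (yn_ne ht), one_smul]

lemma yp_idem (ht : Tab k lam t) : yp k t * yp k t = yp k t := by
  rw [yp, smul_mul_smul_comm, young_sq ht, smul_smul]
  congr 1
  have := yn_ne ht
  field_simp

lemma yp_one (ht : Tab k lam t) : (yp k t).coeff 1 = (yn k t)⁻¹ := by
  simp [yp, young_one ht]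

lemma yn_real (k : ℕ) (t : Fin k → ℕ × ℕ) : (starRingEnd ℂ) (yn k t) = yn k t := by
  rw [yn, coeff_mul_fin, map_sum]
  refine Finset.sum_congr rfl fun g _ => ?_
  rw [map_mul, young_real, young_real]

lemma yp_real (g : Equiv.Perm (Fin k)) :
    (starRingEnd ℂ) ((yp k t).coeff g) = (yp k t).coeff g := by
  simp [yp, young_real, yn_real]

lemma yp_scalar (ht : Tab k lam t) (x : GA k) : ∃ c : ℂ, yp k t * x * yp k t = c • yp k t := by
  obtain ⟨c, hc⟩ := young_scalar ht x
  refine ⟨(yn k t)⁻¹ * c, ?_⟩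
  rw [yp, smul_mul_assoc, smul_mul_assoc, mul_smul_comm, hc, smul_smul, smul_smul, smul_smul]
  congr 1; ring

lemma coeff_sg_mul (σ g : Equiv.Perm (Fin k)) (x : GA k) : (sg σ * x).coeff g = x.coeff (σ⁻¹ * g) := by
  simp [sg]

lemma coeff_mul_sg (σ g : Equiv.Perm (Fin k)) (x : GA k) : (x * sg σ).coeff g = x.coeff (g * σ⁻¹) := by
  simp [sg]

lemma yp_sg_yp (ht : Tab k lam t) (σ : Equiv.Perm (Fin k)) :
    yp k t * sg σ * yp k t = (yn k t * (yp k t).coeff σ⁻¹) • yp k t := by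
  obtain ⟨c, hc⟩ := yp_scalar ht (sg σ)
  rw [hc]
  congr 1
  have h1 : (yp k t * sg σ * yp k t).coeff 1 = (yp k t).coeff σ⁻¹ := by
    rw [coeff_mul_one_comm, ← mul_assoc, yp_idem ht, coeff_mul_sg, one_mul]
  rw [hc] at h1
  simp only [MonoidAlgebra.coeff_smul, Finsupp.smul_apply, yp_one ht, smul_eq_mul] at h1
  rw [← h1]
  have := yn_ne ht
  field_simp

def yz (k : ℕ) (t : Fin k → ℕ × ℕ) : GA k := ∑ σ, sg σ * yp k t * sg σ⁻¹

lemma yz_coeff (g : Equiv.Perm (Fin k)) :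
    (yz k t).coeff g = ∑ σ : Equiv.Perm (Fin k), (yp k t).coeff (σ⁻¹ * g * σ) := by
  simp [yz, MonoidAlgebra.coeff_sum, coeff_sg_mul, coeff_mul_sg, mul_assoc]

lemma yz_comm_sg (τ : Equiv.Perm (Fin k)) : yz k t * sg τ = sg τ * yz k t := by
  rw [yz, Finset.sum_mul, Finset.mul_sum, ← Equiv.sum_comp (Equiv.mulLeft τ)]
  refine Finset.sum_congr rfl fun σ _ => ?_
  simp only [Equiv.coe_mulLeft, _root_.mul_inv_rev, ← sg_mul]
  simp only [mul_assoc]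
  rw [sg_mul τ⁻¹ τ]; simp [sg_one]

lemma yz_comm (x : GA k) : yz k t * x = x * yz k t := by
  rw [ma_expand x, Finset.mul_sum, Finset.sum_mul]
  refine Finset.sum_congr rfl fun σ _ => ?_
  rw [mul_smul_comm, smul_mul_assoc]
  congr 1
  exact yz_comm_sg σ

lemma yz_yp (ht : Tab k lam t) : yz k t * yp k t = yn k t • yp k t := by
  obtain ⟨c, hc⟩ := yp_scalar ht (yz k t)
  rw [← yz_comm, mul_assoc, yp_idem ht] at hc
  rw [hc]
  congr 1
  have h1 : (yz k t * yp k t).coeff 1 = 1 := by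
    rw [yz, Finset.sum_mul, MonoidAlgebra.coeff_sum, Finsupp.finsetSum_apply]
    have : ∀ σ : Equiv.Perm (Fin k), (sg σ * yp k t * sg σ⁻¹ * yp k t).coeff 1 =
        yn k t * ((yp k t).coeff σ * (yp k t).coeff (σ⁻¹ * 1)) := by
      intro σ
      rw [mul_assoc (sg σ), mul_assoc (sg σ), yp_sg_yp ht, coeff_sg_mul]
      simp [mul_assoc]
    rw [Finset.sum_congr rfl fun σ _ => this σ, ← Finset.mul_sum, ← coeff_mul_fin, yp_idem ht,
      yp_one ht, mul_inv_cancel₀ (yn_ne ht)]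
  rw [hc] at h1
  simp only [MonoidAlgebra.coeff_smul, Finsupp.smul_apply, yp_one ht, smul_eq_mul] at h1
  exact (mul_inv_eq_one₀ (yn_ne ht)).1 h1

lemma yz_sq (ht : Tab k lam t) : yz k t * yz k t = yn k t • yz k t := by
  conv_lhs => rhs; rw [yz]
  rw [Finset.mul_sum, yz, Finset.smul_sum]
  refine Finset.sum_congr rfl fun σ _ => ?_
  rw [← yz, ← mul_assoc, ← mul_assoc, yz_comm_sg, mul_assoc (sg σ), yz_yp ht]
  simp

/-- central projector -/
def yP (k : ℕ) (t : Fin k → ℕ × ℕ) : GA k := (yn k t)⁻¹ • yz k t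

lemma yP_idem (ht : Tab k lam t) : yP k t * yP k t = yP k t := by
  rw [yP, smul_mul_smul_comm, yz_sq ht, smul_smul]
  congr 1
  have := yn_ne ht
  field_simp

lemma yP_comm (x : GA k) : yP k t * x = x * yP k t := by
  rw [yP, smul_mul_assoc, yz_comm, mul_smul_comm]

lemma yz_conj {g h : Equiv.Perm (Fin k)} (hc : IsConj g h) : (yz k t).coeff g = (yz k t).coeff h := by
  obtain ⟨c, rfl⟩ := isConj_iff.1 hc
  rw [yz_coeff, yz_coeff, ← Equiv.sum_comp (Equiv.mulLeft c⁻¹)]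
  refine Finset.sum_congr rfl fun σ _ => ?_
  simp [mul_assoc]

lemma yz_inv (g : Equiv.Perm (Fin k)) : (yz k t).coeff g⁻¹ = (yz k t).coeff g :=
  yz_conj (Equiv.Perm.isConj_of_cycleType_eq (Equiv.Perm.cycleType_inv g))

lemma yP_inv (g : Equiv.Perm (Fin k)) : (yP k t).coeff g⁻¹ = (yP k t).coeff g := by
  simp [yP, yz_inv]

lemma yP_SA : SA (yP k t) := by
  intro g
  rw [yP_inv]
  simp only [yP, MonoidAlgebra.coeff_smul, Finsupp.smul_apply, smul_eq_mul, map_mul, map_inv₀,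
    yn_real, yz_coeff, map_sum, yp_real]

lemma yP_ortho_aux (h : ∀ x, youngSym k t * x * youngSym k s = 0) : yP k t * yP k s = 0 := by
  have h' : ∀ x, yp k t * x * yp k s = 0 := by
    intro x
    rw [yp, yp, smul_mul_assoc, smul_mul_assoc, mul_smul_comm, h]; simp
  rw [yP, yP, smul_mul_smul_comm, yz, yz, Finset.sum_mul_sum]
  rw [Finset.sum_eq_zero, smul_zero]
  intro σ _
  refine Finset.sum_eq_zero fun τ _ => ?_
  have := h' (sg σ⁻¹ * sg τ)
  calc sg σ * yp k t * sg σ⁻¹ * (sg τ * yp k s * sg τ⁻¹)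
      = sg σ * (yp k t * (sg σ⁻¹ * sg τ) * yp k s) * sg τ⁻¹ := by simp only [mul_assoc]
    _ = 0 := by rw [this]; simp

lemma yP_ortho (ht : Tab k lam t) (hs : Tab k mu s) (hne : lam ≠ mu) : yP k t * yP k s = 0 := by
  rcases young_ortho ht hs hne with h | h
  · exact yP_ortho_aux h
  · rw [yP_comm]; exact yP_ortho_aux h

lemma yP_ne (ht : Tab k lam t) : yP k t ≠ 0 := by
  intro h
  have h1 : yP k t * yp k t = yp k t := by
    rw [yP, smul_mul_assoc, yz_yp ht, smul_smul, inv_mul_cancel₀ (yn_ne ht), one_smul]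
  rw [h, zero_mul] at h1
  have := yp_one ht
  rw [← h1] at this
  simp at this
  exact yn_ne ht this.symm

/-- character in terms of the projector -/
lemma char_eq (ht : Tab k lam t) (π : Equiv.Perm (Fin k)) :
    youngIdealChar k t π = yn k t * (yP k t).coeff π := by
  have hyz : yn k t * (yP k t).coeff π = (yz k t).coeff π := by
    simp [yP, ← mul_assoc, mul_inv_cancel₀ (yn_ne ht)]
  rw [hyz, ← yz_inv]
  let f : GA k →ₗ[ℂ] GA k := LinearMap.mulLeft ℂ (sg π) ∘ₗ LinearMap.mulRight ℂ (yp k t)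
  have hf : ∀ x, f x ∈ youngIdeal k t := by
    intro x
    refine ⟨(yn k t)⁻¹ • (sg π * x), ?_⟩
    simp [f, yp, mul_assoc]
  have h1 := LinearMap.trace_restrict_eq_of_forall_mem (youngIdeal k t) f hf
  have h2 : youngIdealChar k t π = LinearMap.trace ℂ (GA k) f := by
    rw [← h1, youngIdealChar]
    congr 1
    ext ⟨x, y, rfl⟩
    simp only [LinearMap.coe_restrict_apply, f, LinearMap.comp_apply, LinearMap.mulRight_apply,
      LinearMap.mulLeft_apply, sg]
    rw [mul_assoc y, yp, mul_smul_comm, young_sq ht, smul_smul, inv_mul_cancel₀ (yn_ne ht), one_smul]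
  rw [h2, yz_coeff]
  rw [LinearMap.trace_eq_matrix_trace ℂ (MonoidAlgebra.basis (Equiv.Perm (Fin k)) ℂ), Matrix.trace]
  refine Finset.sum_congr rfl fun σ _ => ?_
  rw [Matrix.diag_apply, LinearMap.toMatrix_apply]
  have hb : MonoidAlgebra.basis (Equiv.Perm (Fin k)) ℂ σ = sg σ := by
    simp [sg]
  have hr : ∀ x : GA k, (MonoidAlgebra.basis (Equiv.Perm (Fin k)) ℂ).repr x = x.coeff := fun x => rfl
  rw [hb, hr]
  simp only [f, LinearMap.comp_apply, LinearMap.mulRight_apply, LinearMap.mulLeft_apply,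
    coeff_sg_mul]
  simp [mul_assoc]

end Kron
end part3

section part4
open Matrix ComplexOrder
set_option linter.unusedSectionVars false
set_option linter.unusedSimpArgs false
namespace Kron
variable {k : ℕ} {lam mu : ℕ → ℕ} {t s : Fin k → ℕ × ℕ}

def lamOf (p : Nat.Partition k) (i : ℕ) : ℕ := (p.parts.filter (i < ·)).card

lemma sum_filter_card (s : Multiset ℕ) (K : ℕ) (h : ∀ a ∈ s, a ≤ K) :
    ∑ i ∈ range K, (s.filter (i < ·)).card = s.sum := by
  induction s using Multiset.induction_on with
  | empty => simp
  | cons a s ih =>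
    have ih' := ih (fun b hb => h b (Multiset.mem_cons_of_mem hb))
    have ha := h a (Multiset.mem_cons_self a s)
    simp only [Multiset.filter_cons, Multiset.card_add, Finset.sum_add_distrib, ih',
      Multiset.sum_cons]
    congr 1
    have : ∀ i, (Multiset.card (if i < a then ({a} : Multiset ℕ) else 0)) = if i < a then 1 else 0 := by
      intro i; split_ifs <;> simp
    simp only [this, Finset.sum_boole]
    have h2 : (range K).filter (fun i => i < a) = range a := by
      ext i; simp; omega
    rw [h2]; simp

lemma lamOf_part (p : Nat.Partition k) : IsPartitionOf k (lamOf p) := by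
  have hle : ∀ a ∈ p.parts, a ≤ k := fun a ha => by
    have := Multiset.single_le_sum (fun x _ => Nat.zero_le x) a ha
    rwa [p.parts_sum] at this
  refine ⟨?_, ?_, ?_⟩
  · intro i j hij
    exact Multiset.card_le_card (Multiset.monotone_filter_right _ (fun a h => by omega))
  · intro i hi
    rw [lamOf, Multiset.card_eq_zero, Multiset.filter_eq_nil]
    intro a ha
    have := hle a ha
    omega
  · have := sum_filter_card p.parts k hle
    rw [p.parts_sum] at this
    exact this

lemma lamOf_inj : Function.Injective (lamOf : Nat.Partition k → ℕ → ℕ) := by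
  intro p q h
  have hc : ∀ (p : Nat.Partition k) (x : ℕ), lamOf p x = p.parts.count (x+1) + lamOf p (x+1) := by
    intro p x
    rw [lamOf, lamOf, Multiset.count_eq_card_filter_eq, ← Multiset.card_add]
    congr 1
    rw [Multiset.filter_add_filter]
    have h1 : p.parts.filter (fun a => x + 1 = a ∧ x + 1 < a) = 0 := by
      rw [Multiset.filter_eq_nil]; intro a _; omega
    rw [h1, add_zero]
    exact Multiset.filter_congr (fun a _ => by omega)
  apply Nat.Partition.ext
  ext x
  rcases x with _ | x
  · rw [Multiset.count_eq_zero_of_notMem, Multiset.count_eq_zero_of_notMem]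
    · intro h0; exact absurd (q.parts_pos h0) (by omega)
    · intro h0; exact absurd (p.parts_pos h0) (by omega)
  · have h1 := hc p x
    have h2 := hc q x
    rw [h] at h1
    omega

lemma exists_tab (h : IsPartitionOf k lam) : ∃ t : Fin k → ℕ × ℕ, Tab k lam t := by
  have hc : (youngCells k lam).card = k := by
    rw [youngCells, Finset.card_filter, Finset.sum_product]
    conv_rhs => rw [← h.2.2]
    refine Finset.sum_congr rfl fun i _ => ?_
    rw [← Finset.card_filter]
    have := part_le h i
    have h2 : (range k).filter (fun j => j < lam i) = range (lam i) := by
      ext j; simp; omega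
    simp [h2]
  let e := (Finset.equivFinOfCardEq hc).symm
  refine ⟨fun j => (e j).1, h, ?_, ?_, ?_⟩
  · intro j _; exact (e j).2
  · intro i _ j _ hij; exact e.injective (Subtype.ext hij)
  · intro c hc; exact ⟨e.symm ⟨c, hc⟩, trivial, by simp⟩

def tabOf (p : Nat.Partition k) : Fin k → ℕ × ℕ := (exists_tab (lamOf_part p)).choose

lemma tabOf_tab (p : Nat.Partition k) : Tab k (lamOf p) (tabOf p) :=
  (exists_tab (lamOf_part p)).choose_spec

def PP (p : Nat.Partition k) : GA k := yP k (tabOf p)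

lemma PP_idem (p : Nat.Partition k) : PP p * PP p = PP p := yP_idem (tabOf_tab p)
lemma PP_comm (p : Nat.Partition k) (x : GA k) : PP p * x = x * PP p := yP_comm x
lemma PP_ortho {p q : Nat.Partition k} (h : p ≠ q) : PP p * PP q = 0 :=
  yP_ortho (tabOf_tab p) (tabOf_tab q) (fun h' => h (lamOf_inj h'))
lemma PP_ne (p : Nat.Partition k) : PP p ≠ 0 := yP_ne (tabOf_tab p)
lemma PP_SA (p : Nat.Partition k) : SA (PP p) := yP_SA

def cyc (π : Equiv.Perm (Fin k)) : Nat.Partition (Fintype.card (Fin k)) := π.partition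

lemma isConj_of_cyc {π τ : Equiv.Perm (Fin k)} (h : cyc π = cyc τ) : IsConj π τ :=
  Equiv.Perm.partition_eq_of_isConj.2 h

def clsF : (Nat.Partition (Fintype.card (Fin k)) → ℂ) →ₗ[ℂ] GA k where
  toFun F := ∑ π, F (cyc π) • sg π
  map_add' F G := by simp [add_smul, Finset.sum_add_distrib]
  map_smul' c F := by simp [Finset.smul_sum, smul_smul]

lemma clsF_coeff (F) (π : Equiv.Perm (Fin k)) : (clsF F).coeff π = F (cyc π) := by
  simp [clsF, sg, MonoidAlgebra.coeff_sum, Finsupp.single_apply]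

lemma mem_clsF {x : GA k} (h : ∀ π τ, IsConj π τ → x.coeff π = x.coeff τ) :
    x ∈ LinearMap.range (clsF (k := k)) := by
  classical
  refine ⟨fun q => if hq : ∃ π : Equiv.Perm (Fin k), cyc π = q then x.coeff hq.choose else 0, ?_⟩
  ext π
  rw [clsF_coeff]
  have hq : ∃ τ : Equiv.Perm (Fin k), cyc τ = cyc π := ⟨π, rfl⟩
  rw [dif_pos hq]
  exact h _ _ (isConj_of_cyc hq.choose_spec)

lemma PP_indep : LinearIndependent ℂ (PP : Nat.Partition k → GA k) := by
  rw [Fintype.linearIndependent_iff]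
  intro c hc p
  have h1 : (∑ q, c q • PP q) * PP p = c p • PP p := by
    rw [Finset.sum_mul, Finset.sum_eq_single p]
    · rw [smul_mul_assoc, PP_idem]
    · intro q _ hq; rw [smul_mul_assoc, PP_ortho hq, smul_zero]
    · simp
  rw [hc, zero_mul] at h1
  exact (smul_eq_zero.1 h1.symm).resolve_right (PP_ne p)

lemma sum_PP : ∑ p : Nat.Partition k, PP p = 1 := by
  have hle : Submodule.span ℂ (Set.range (PP : Nat.Partition k → GA k)) ≤
      LinearMap.range (clsF (k := k)) := by
    rw [Submodule.span_le]
    rintro _ ⟨p, rfl⟩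
    exact mem_clsF fun π τ h => by simp [PP, yP, yz_conj h]
  have heq : Submodule.span ℂ (Set.range (PP : Nat.Partition k → GA k)) =
      LinearMap.range (clsF (k := k)) := by
    apply Submodule.eq_of_le_of_finrank_le hle
    rw [finrank_span_eq_card PP_indep]
    refine (LinearMap.finrank_range_le _).trans ?_
    rw [Module.finrank_fintype_fun_eq_card]
    apply le_of_eq
    have : ∀ n, n = k → Fintype.card (Nat.Partition n) = Fintype.card (Nat.Partition k) := by
      rintro n rfl; rfl
    exact this _ (Fintype.card_fin k)
  have h1 : (1 : GA k) ∈ LinearMap.range (clsF (k := k)) := by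
    refine mem_clsF fun π τ h => ?_
    have : (π = 1) ↔ (τ = 1) := by
      constructor
      · rintro rfl; exact (isConj_one_right.1 h) 
      · rintro rfl; exact (isConj_one_right.1 h.symm)
    simp only [MonoidAlgebra.one_def, MonoidAlgebra.coeff_single, Finsupp.single_apply]
    simp only [eq_comm (a := (1 : Equiv.Perm (Fin k))), this]
  rw [← heq, Submodule.mem_span_range_iff_exists_fun] at h1
  obtain ⟨c, hc⟩ := h1
  rw [← hc]
  refine Finset.sum_congr rfl fun p _ => ?_
  have h1 : (∑ q, c q • PP q) * PP p = c p • PP p := by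
    rw [Finset.sum_mul, Finset.sum_eq_single p]
    · rw [smul_mul_assoc, PP_idem]
    · intro q _ hq; rw [smul_mul_assoc, PP_ortho hq, smul_zero]
    · simp
  rw [← h1, hc, one_mul]

end Kron
end part4

section part5
open Matrix ComplexOrder
set_option linter.unusedSectionVars false
set_option linter.unusedSimpArgs false
namespace Kron
variable {k : ℕ} {lam mu : ℕ → ℕ} {t s : Fin k → ℕ × ℕ}

abbrev SS (k : ℕ) := Equiv.Perm (Fin k)
abbrev GA2 (k : ℕ) := MonoidAlgebra ℂ (SS k × SS k)

def dg (k : ℕ) : SS k →* SS k × SS k := (MonoidHom.id _).prod (MonoidHom.id _)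

def i1 : GA k →ₐ[ℂ] GA2 k := MonoidAlgebra.mapDomainAlgHom ℂ ℂ (MonoidHom.inl (SS k) (SS k))
def i2 : GA k →ₐ[ℂ] GA2 k := MonoidAlgebra.mapDomainAlgHom ℂ ℂ (MonoidHom.inr (SS k) (SS k))
def dl : GA k →ₐ[ℂ] GA2 k := MonoidAlgebra.mapDomainAlgHom ℂ ℂ (dg k)

lemma i1_sg (π : SS k) : i1 (sg π) = MonoidAlgebra.single (π, 1) 1 := by
  simp [i1, sg]
lemma i2_sg (π : SS k) : i2 (sg π) = MonoidAlgebra.single (1, π) 1 := by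
  simp [i2, sg]
lemma dl_sg (π : SS k) : dl (sg π) = MonoidAlgebra.single (π, π) 1 := by
  simp [dl, sg, dg]

lemma ga_ext_comm {A : Type} [Ring A] [Algebra ℂ A] (f : GA k →ₐ[ℂ] A) (a : A)
    (h : ∀ π, f (sg π) * a = a * f (sg π)) (x : GA k) : f x * a = a * f x := by
  rw [ma_expand x, map_sum, Finset.sum_mul, Finset.mul_sum]
  refine Finset.sum_congr rfl fun π _ => ?_
  rw [map_smul, smul_mul_assoc, mul_smul_comm]
  congr 1
  exact h π

lemma i1_i2 (x y : GA k) : i1 x * i2 y = i2 y * i1 x := by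
  refine ga_ext_comm i1 _ (fun π => ?_) x
  refine (ga_ext_comm i2 _ (fun τ => ?_) y).symm
  rw [i1_sg, i2_sg]
  simp [MonoidAlgebra.single_mul_single]

lemma dl_sg' (π : SS k) : dl (sg π) = i1 (sg π) * i2 (sg π) := by
  rw [i1_sg, i2_sg, dl_sg, MonoidAlgebra.single_mul_single]; simp

lemma dl_i1 (p : Nat.Partition k) (x : GA k) : dl x * i1 (PP p) = i1 (PP p) * dl x := by
  refine ga_ext_comm dl _ (fun π => ?_) x
  rw [dl_sg', mul_assoc, ← i1_i2, ← mul_assoc, ← map_mul, ← PP_comm, map_mul, mul_assoc]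

lemma dl_i2 (p : Nat.Partition k) (x : GA k) : dl x * i2 (PP p) = i2 (PP p) * dl x := by
  refine ga_ext_comm dl _ (fun π => ?_) x
  rw [dl_sg', mul_assoc, ← map_mul, ← PP_comm, map_mul, ← mul_assoc, i1_i2, mul_assoc]

def yy (p q r : Nat.Partition k) : GA2 k := i1 (PP q) * i2 (PP r) * dl (PP p)

section rep
variable {X : Type} [Fintype X] [DecidableEq X] (act : SS k × SS k →* Equiv.Perm X)

lemma toMat_yy (p q r : Nat.Partition k) : toMat act (yy p q r) =
    toMat (act.comp (MonoidHom.inl _ _)) (PP q) * toMat (act.comp (MonoidHom.inr _ _)) (PP r) *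
      toMat (act.comp (dg k)) (PP p) := by
  rw [yy, map_mul, map_mul, i1, i2, dl, toMat_map, toMat_map, toMat_map]

lemma yy_idem (p q r : Nat.Partition k) : yy p q r * yy p q r = yy p q r := by
  have e1 : i1 (PP q) * i1 (PP q) = i1 (PP q) := by rw [← map_mul, PP_idem]
  have e2 : i2 (PP r) * i2 (PP r) = i2 (PP r) := by rw [← map_mul, PP_idem]
  have e3 : dl (PP p) * dl (PP p) = dl (PP p) := by rw [← map_mul, PP_idem]
  calc yy p q r * yy p q r
      = i1 (PP q) * i2 (PP r) * (dl (PP p) * i1 (PP q)) * i2 (PP r) * dl (PP p) := by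
        simp only [yy, mul_assoc]
    _ = i1 (PP q) * (i2 (PP r) * i1 (PP q)) * (dl (PP p) * i2 (PP r)) * dl (PP p) := by
        rw [dl_i1]; simp only [mul_assoc]
    _ = (i1 (PP q) * i1 (PP q)) * (i2 (PP r) * i2 (PP r)) * (dl (PP p) * dl (PP p)) := by
        rw [dl_i2, ← i1_i2]; simp only [mul_assoc]
    _ = yy p q r := by rw [e1, e2, e3, yy]

lemma yy_herm (p q r : Nat.Partition k) : (toMat act (yy p q r)).IsHermitian := by
  have h1 : (toMat act (i1 (PP q))).IsHermitian := by
    rw [i1, toMat_map]; exact (PP_SA q).toMat _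
  have h2 : (toMat act (i2 (PP r))).IsHermitian := by
    rw [i2, toMat_map]; exact (PP_SA r).toMat _
  have h3 : (toMat act (dl (PP p))).IsHermitian := by
    rw [dl, toMat_map]; exact (PP_SA p).toMat _
  rw [IsHermitian, yy, map_mul, map_mul, conjTranspose_mul, conjTranspose_mul, h1.eq, h2.eq, h3.eq]
  rw [← map_mul, ← map_mul, ← map_mul, ← map_mul, ← mul_assoc, dl_i2, mul_assoc, dl_i1, ← mul_assoc,
    i1_i2]

end rep

lemma yy_coeff (p q r : Nat.Partition k) : (yy p q r).coeff 1 =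
    ∑ π, (PP p).coeff π * (PP q).coeff π * (PP r).coeff π := by
  have tri : ∀ a b c : GA k, (i1 a * i2 b * dl c).coeff 1 =
      ∑ l, a.coeff l⁻¹ * b.coeff l⁻¹ * c.coeff l := by
    intro a b c
    conv_lhs => rw [ma_expand a, ma_expand b, ma_expand c]
    simp only [map_sum, map_smul, Finset.sum_mul, Finset.mul_sum, smul_mul_assoc, mul_smul_comm]
    simp only [MonoidAlgebra.coeff_sum, Finsupp.finsetSum_apply, MonoidAlgebra.coeff_smul,
      Finsupp.smul_apply, smul_eq_mul]
    have hh : ∀ g h l : SS k, (i1 (MonoidAlgebra.single g 1) * i2 (MonoidAlgebra.single h 1) *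
        dl (MonoidAlgebra.single l 1)).coeff 1 = if h = l⁻¹ then (if g = l⁻¹ then (1:ℂ) else 0) else 0 := by
      intro g h l
      have := i1_sg g
      have h2 := i2_sg h
      have h3 := dl_sg l
      simp only [sg] at this h2 h3
      rw [this, h2, h3, MonoidAlgebra.single_mul_single, MonoidAlgebra.single_mul_single]
      simp only [MonoidAlgebra.coeff_single, Finsupp.single_apply, Prod.mk_mul_mk, one_mul, mul_one,
        Prod.ext_iff, Prod.fst_one, Prod.snd_one, mul_eq_one_iff_eq_inv]
      split_ifs <;> simp_all
    simp only [hh]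
    simp
    try (refine Finset.sum_congr rfl fun l _ => ?_; ring)
  rw [yy, tri]
  refine Finset.sum_congr rfl fun π _ => ?_
  rw [PP, PP, PP, yP_inv, yP_inv]; ring

lemma yy_zero {p q r : Nat.Partition k}
    (h : ∑ π, (PP p).coeff π * (PP q).coeff π * (PP r).coeff π = 0) : yy p q r = 0 := by
  apply toMat_reg_inj
  refine herm_idem_zero (yy_herm _ p q r) ?_ ?_
  · rw [← map_mul, yy_idem]
  · rw [trace_reg, yy_coeff, h, mul_zero]

lemma kron_ne {chi : (k : ℕ) → (ℕ → ℕ) → Equiv.Perm (Fin k) → ℂ} (hchi : IsCharacterFamily chi)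
    {g : (k : ℕ) → (ℕ → ℕ) → (ℕ → ℕ) → (ℕ → ℕ) → ℕ} (hg : IsKroneckerFamily chi g)
    {p q r : Nat.Partition k} (hy : yy p q r ≠ 0) : g k (lamOf p) (lamOf q) (lamOf r) ≠ 0 := by
  intro h0
  apply hy
  apply yy_zero
  have h := hg k _ _ _ (lamOf_part p) (lamOf_part q) (lamOf_part r)
  have hc : ∀ (p : Nat.Partition k) π, chi k (lamOf p) π = yn k (tabOf p) * (PP p).coeff π := by
    intro p π
    rw [hchi k _ (lamOf_part p) (tabOf p) (tabOf_tab p).bij, char_eq (tabOf_tab p), PP]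
  rw [h0, Nat.cast_zero, zero_eq_mul] at h
  have h1 := h.resolve_left (inv_ne_zero (Nat.cast_ne_zero.2 (Nat.factorial_ne_zero k)))
  simp only [hc] at h1
  have h2 : (yn k (tabOf p) * yn k (tabOf q) * yn k (tabOf r)) *
      ∑ π, (PP p).coeff π * (PP q).coeff π * (PP r).coeff π = 0 := by
    rw [← h1, Finset.mul_sum]
    refine Finset.sum_congr rfl fun π _ => ?_
    ring
  exact (mul_eq_zero.1 h2).resolve_left (mul_ne_zero (mul_ne_zero (yn_ne (tabOf_tab p))
    (yn_ne (tabOf_tab q))) (yn_ne (tabOf_tab r)))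

end Kron
end part5

section part6
open Matrix ComplexOrder
set_option linter.unusedSectionVars false
set_option linter.unusedSimpArgs false
namespace Kron
variable {k : ℕ}

section words
variable {ι κ η : Type} [Fintype ι] [Fintype κ] [Fintype η] [DecidableEq ι] [DecidableEq κ]
  [DecidableEq η]

/-- The action of permutations on words. -/
def wact (k : ℕ) (ι : Type) : SS k →* Equiv.Perm (Fin k → ι) where
  toFun π :=
    { toFun := fun w j => w (π⁻¹ j)
      invFun := fun w j => w (π j)
      left_inv := fun w => by funext j; simp
      right_inv := fun w => by funext j; simp }
  map_one' := by ext w j; simp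
  map_mul' π τ := by ext w j; simp [_root_.mul_inv_rev]

lemma wact_apply (π : SS k) (w : Fin k → ι) (j) : wact k ι π w j = w (π⁻¹ j) := rfl

/-- Tensor power of a matrix. -/
def K (k : ℕ) (M : Matrix ι κ ℂ) : Matrix (Fin k → ι) (Fin k → κ) ℂ :=
  Matrix.of fun w w' => ∏ j, M (w j) (w' j)

lemma K_apply (M : Matrix ι κ ℂ) (w w') : K k M w w' = ∏ j, M (w j) (w' j) := rfl

lemma K_mul (M : Matrix ι κ ℂ) (N : Matrix κ η ℂ) : K k (M * N) = K k M * K k N := by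
  ext w w'
  simp only [K_apply, Matrix.mul_apply]
  rw [Finset.prod_univ_sum]
  simp [Finset.prod_mul_distrib]

lemma K_conj (M : Matrix ι κ ℂ) : (K k M)ᴴ = K k Mᴴ := by
  ext w w'
  simp [K_apply, conjTranspose_apply]

lemma K_one : K k (1 : Matrix ι ι ℂ) = 1 := by
  ext w w'
  simp only [K_apply, Matrix.one_apply, Finset.prod_ite_zero, Finset.mem_univ, true_imp_iff,
    Finset.prod_const_one, funext_iff]

lemma K_trace (M : Matrix ι ι ℂ) : (K k M).trace = M.trace ^ k := by
  have h := Finset.prod_univ_sum (fun _ : Fin k => (univ : Finset ι)) (fun _ i => M i i)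
  simp only [Finset.prod_const, Finset.card_univ, Fintype.card_fin, Fintype.piFinset_univ] at h
  simp only [Matrix.trace, diag_apply, K_apply]
  rw [h]

lemma trace_act {G X : Type} [Group G] [Fintype G] [DecidableEq G] [Fintype X] [DecidableEq X]
    (act : G →* Equiv.Perm X) (x : MonoidAlgebra ℂ G) (N : Matrix X X ℂ) :
    (toMat act x * N).trace = ∑ g, x.coeff g * ∑ v, N v (act g v) := by
  simp only [Matrix.trace, diag_apply, Matrix.mul_apply, toMat_apply, Finset.sum_mul,
    Finset.mul_sum, ite_mul, zero_mul]
  rw [Finset.sum_comm]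
  simp only [Finset.sum_comm (s := (univ : Finset X)) (t := (univ : Finset G))]
  simp

lemma toMat_K (x : GA k) (M : Matrix ι κ ℂ) :
    toMat (wact k ι) x * K k M = K k M * toMat (wact k κ) x := by
  have key : ∀ π : SS k, toMat (wact k ι) (MonoidAlgebra.single π 1) * K k M =
      K k M * toMat (wact k κ) (MonoidAlgebra.single π 1) := by
    intro π
    ext u w
    simp only [Matrix.mul_apply, toMat_single, ite_mul, mul_ite, one_mul, mul_one, zero_mul,
      mul_zero, Finset.sum_ite_eq, Finset.mem_univ, if_true]
    have h1 : ∀ v, (wact k ι π v = u) ↔ v = (wact k ι π).symm u := by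
      intro v; rw [Equiv.eq_symm_apply]
    simp only [h1, Finset.sum_ite_eq', Finset.mem_univ, if_true]
    rw [K_apply, K_apply]
    refine Fintype.prod_equiv π _ _ fun j => ?_
    simp [wact]
  rw [ma_expand x]
  simp only [map_sum, map_smul, Matrix.sum_mul, Matrix.mul_sum, Matrix.smul_mul, Matrix.mul_smul]
  exact Finset.sum_congr rfl fun π _ => by rw [key]

lemma trace_conj (x : GA k) (V : Matrix ι κ ℂ) (D : Matrix κ κ ℂ) (V' : Matrix κ ι ℂ)
    (h : V' * V = 1) :
    (toMat (wact k ι) x * K k (V * D * V')).trace = (toMat (wact k κ) x * K k D).trace := by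
  rw [K_mul, K_mul, ← Matrix.mul_assoc, ← Matrix.mul_assoc, toMat_K, Matrix.trace_mul_comm,
    ← Matrix.mul_assoc, ← Matrix.mul_assoc, ← K_mul, h, K_one, Matrix.one_mul]

lemma trace_spec {d : ℕ} (M : Matrix ι ι ℂ) (hM : M.IsHermitian) (e : Fin d ≃ ι) (s : Fin d → ℝ)
    (hs : ∀ i, s i = hM.eigenvalues (e i)) (x : GA k) :
    (toMat (wact k ι) x * K k M).trace =
      (toMat (wact k (Fin d)) x * K k (diagonal fun i => (s i : ℂ))).trace := by
  set U : Matrix ι ι ℂ := (hM.eigenvectorUnitary).1 with hU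
  have hUU : Uᴴ * U = 1 := by
    have := (Matrix.mem_unitaryGroup_iff').1 hM.eigenvectorUnitary.2
    simpa [star_eq_conjTranspose] using this
  have hM2 : M = U * diagonal (fun i => (hM.eigenvalues i : ℂ)) * Uᴴ := by
    have := hM.spectral_theorem
    rw [Unitary.conjStarAlgAut_apply] at this
    simpa [star_eq_conjTranspose, Function.comp_def] using this
  have hd : (diagonal fun i => (s i : ℂ)) =
      (diagonal (fun i => (hM.eigenvalues i : ℂ))).submatrix e e := by
    rw [submatrix_diagonal_equiv]
    simp [Function.comp_def, hs]
  have := trace_conj x (U.submatrix id e) (diagonal fun i => (s i : ℂ)) (Uᴴ.submatrix e id) (by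
    rw [← submatrix_mul _ _ _ _ _ Function.bijective_id, hUU]; simp)
  rw [← this]
  congr 3
  rw [hd, submatrix_mul_equiv, submatrix_mul_equiv, ← hM2]; simp

def wt (M : Matrix ι ι ℂ) (p : Nat.Partition k) : ℝ :=
  (toMat (wact k ι) (PP p) * K k M).trace.re

end words

section bip
variable {A B : Type} [Fintype A] [Fintype B] [DecidableEq A] [DecidableEq B]

def act2 (k : ℕ) (A B : Type) : SS k × SS k →* Equiv.Perm ((Fin k → A) × (Fin k → B)) where
  toFun π := Equiv.prodCongr (wact k A π.1) (wact k B π.2)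
  map_one' := by ext x <;> simp
  map_mul' π τ := by ext x <;> simp

def KK (k : ℕ) (ρ : Matrix (A × B) (A × B) ℂ) :
    Matrix ((Fin k → A) × (Fin k → B)) ((Fin k → A) × (Fin k → B)) ℂ :=
  (K k ρ).submatrix (fun v j => (v.1 j, v.2 j)) (fun v j => (v.1 j, v.2 j))

lemma KK_apply (ρ : Matrix (A × B) (A × B) ℂ) (v w) :
    KK k ρ v w = ∏ j, ρ (v.1 j, v.2 j) (w.1 j, w.2 j) := rfl

open scoped MatrixOrder Matrix.Norms.L2Operator in
lemma KK_psd {ρ : Matrix (A × B) (A × B) ℂ} (h : ρ.PosSemidef) : (KK k ρ).PosSemidef := by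
  obtain ⟨B, rfl⟩ := CStarAlgebra.nonneg_iff_eq_star_mul_self.1 (Matrix.nonneg_iff_posSemidef.2 h)
  refine PosSemidef.submatrix ?_ _
  rw [K_mul, star_eq_conjTranspose, ← K_conj]
  exact posSemidef_conjTranspose_mul_self _

lemma tr_A {ρ : Matrix (A × B) (A × B) ℂ} {ρA : Matrix A A ℂ}
    (hρA : ∀ a a', ρA a a' = ∑ b, ρ (a, b) (a', b)) (x : GA k) :
    (toMat (act2 k A B) (i1 x) * KK k ρ).trace = (toMat (wact k A) x * K k ρA).trace := by
  rw [i1, toMat_map, trace_act, trace_act]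
  refine Finset.sum_congr rfl fun π _ => ?_
  congr 1
  rw [Fintype.sum_prod_type]
  refine Finset.sum_congr rfl fun w _ => ?_
  rw [K_apply]
  simp only [hρA]
  rw [Finset.prod_univ_sum, Fintype.piFinset_univ]
  refine Finset.sum_congr rfl fun z _ => ?_
  simp [KK_apply, act2]

lemma tr_B {ρ : Matrix (A × B) (A × B) ℂ} {ρB : Matrix B B ℂ}
    (hρB : ∀ b b', ρB b b' = ∑ a, ρ (a, b) (a, b')) (x : GA k) :
    (toMat (act2 k A B) (i2 x) * KK k ρ).trace = (toMat (wact k B) x * K k ρB).trace := by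
  rw [i2, toMat_map, trace_act, trace_act]
  refine Finset.sum_congr rfl fun π _ => ?_
  congr 1
  rw [Fintype.sum_prod_type, Finset.sum_comm]
  refine Finset.sum_congr rfl fun w _ => ?_
  rw [K_apply]
  simp only [hρB]
  rw [Finset.prod_univ_sum, Fintype.piFinset_univ]
  refine Finset.sum_congr rfl fun z _ => ?_
  simp [KK_apply, act2]

lemma tr_AB (ρ : Matrix (A × B) (A × B) ℂ) (x : GA k) :
    (toMat (act2 k A B) (dl x) * KK k ρ).trace = (toMat (wact k (A × B)) x * K k ρ).trace := by
  rw [dl, toMat_map, trace_act, trace_act]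
  refine Finset.sum_congr rfl fun π _ => ?_
  congr 1
  refine Fintype.sum_equiv (Equiv.arrowProdEquivProdArrow (Fin k) (fun _ => A) (fun _ => B)).symm _ _ fun v => ?_
  simp [KK_apply, act2, K_apply, dg, wact_apply]

def tt (ρ : Matrix (A × B) (A × B) ℂ) (p q r : Nat.Partition k) : ℝ :=
  (toMat (act2 k A B) (yy p q r) * KK k ρ).trace.re

lemma tt_nonneg {ρ : Matrix (A × B) (A × B) ℂ} (h : ρ.PosSemidef) (p q r : Nat.Partition k) :
    0 ≤ tt ρ p q r := by
  set Y := toMat (act2 k A B) (yy p q r) with hY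
  have hH : Yᴴ = Y := yy_herm _ p q r
  have hI : Y * Y = Y := by rw [hY, ← map_mul, yy_idem]
  have : (Y * KK k ρ).trace = (Yᴴ * KK k ρ * Y).trace := by
    rw [Matrix.trace_mul_comm (Yᴴ * KK k ρ), hH, ← mul_assoc, hI]
  rw [tt, ← hY, this]
  have h2 := ((KK_psd (k := k) h).conjTranspose_mul_mul_same Y).trace_nonneg
  exact (Complex.nonneg_iff.1 h2).1

lemma re_sum_tr {I : Type} (S : Finset I) (x : I → GA2 k) (ρ : Matrix (A × B) (A × B) ℂ) :
    ∑ i ∈ S, (toMat (act2 k A B) (x i) * KK k ρ).trace.re =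
      (toMat (act2 k A B) (∑ i ∈ S, x i) * KK k ρ).trace.re := by
  rw [map_sum, Finset.sum_mul, Matrix.trace_sum, Complex.re_sum]

lemma tt_p (ρ : Matrix (A × B) (A × B) ℂ) (p : Nat.Partition k) :
    ∑ q, ∑ r, tt ρ p q r = wt ρ p := by
  simp only [tt, re_sum_tr]
  have : ∑ q, ∑ r, yy p q r = dl (PP p) := by
    simp only [yy, ← Finset.sum_mul, ← Finset.mul_sum, ← map_sum, sum_PP, map_one, one_mul, mul_one]
  rw [this, tr_AB, wt]

lemma tt_q {ρ : Matrix (A × B) (A × B) ℂ} {ρA : Matrix A A ℂ}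
    (hρA : ∀ a a', ρA a a' = ∑ b, ρ (a, b) (a', b)) (q : Nat.Partition k) :
    ∑ p, ∑ r, tt ρ p q r = wt ρA q := by
  simp only [tt, re_sum_tr]
  have : ∑ p, ∑ r, yy p q r = i1 (PP q) := by
    simp only [yy, ← Finset.sum_mul, ← Finset.mul_sum, ← map_sum, sum_PP, map_one, one_mul, mul_one]
  rw [this, tr_A hρA, wt]

lemma tt_r {ρ : Matrix (A × B) (A × B) ℂ} {ρB : Matrix B B ℂ}
    (hρB : ∀ b b', ρB b b' = ∑ a, ρ (a, b) (a, b')) (r : Nat.Partition k) :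
    ∑ p, ∑ q, tt ρ p q r = wt ρB r := by
  simp only [tt, re_sum_tr]
  have : ∑ p, ∑ q, yy p q r = i2 (PP r) := by
    simp only [yy, ← Finset.sum_mul, ← Finset.mul_sum, ← map_sum, sum_PP, map_one, one_mul, mul_one]
  rw [this, tr_B hρB, wt]

lemma tt_all {ρ : Matrix (A × B) (A × B) ℂ} (h : ρ.trace = 1) :
    ∑ p : Nat.Partition k, ∑ q, ∑ r, tt ρ p q r = 1 := by
  simp only [tt, re_sum_tr]
  have : ∑ p : Nat.Partition k, ∑ q, ∑ r, yy p q r = dl 1 := by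
    simp only [yy, ← Finset.sum_mul, ← Finset.mul_sum, ← map_sum, sum_PP, map_one, one_mul, mul_one]
  rw [this, tr_AB, map_one, one_mul, K_trace, h]; simp

open Classical in
lemma exists_triple {ρ : Matrix (A × B) (A × B) ℂ} {ρA : Matrix A A ℂ} {ρB : Matrix B B ℂ}
    (h : ρ.PosSemidef) (htr : ρ.trace = 1)
    (hρA : ∀ a a', ρA a a' = ∑ b, ρ (a, b) (a', b))
    (hρB : ∀ b b', ρB b b' = ∑ a, ρ (a, b) (a, b'))
    (G1 G2 G3 : Nat.Partition k → Prop)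
    (h1 : ∑ p with ¬ G1 p, wt ρ p < 1 / 3)
    (h2 : ∑ p with ¬ G2 p, wt ρA p < 1 / 3)
    (h3 : ∑ p with ¬ G3 p, wt ρB p < 1 / 3) :
    ∃ p q r : Nat.Partition k, G1 p ∧ G2 q ∧ G3 r ∧ yy p q r ≠ 0 := by
  by_contra hcon
  push Not at hcon
  have hb : ∀ p q r : Nat.Partition k, tt ρ p q r ≤ (if ¬ G1 p then tt ρ p q r else 0) +
      (if ¬ G2 q then tt ρ p q r else 0) + (if ¬ G3 r then tt ρ p q r else 0) := by
    intro p q r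
    have h0 := tt_nonneg h p q r
    by_cases g1 : G1 p <;> by_cases g2 : G2 q <;> by_cases g3 : G3 r <;> simp [g1, g2, g3, h0]
    rw [tt, hcon p q r g1 g2 g3]; simp
  have hs := Finset.sum_le_sum fun p (_ : p ∈ univ) => Finset.sum_le_sum fun q (_ : q ∈ univ) =>
    Finset.sum_le_sum fun r (_ : r ∈ univ) => hb p q r
  rw [tt_all htr] at hs
  simp only [Finset.sum_add_distrib] at hs
  have e1 : ∑ p : Nat.Partition k, ∑ q, ∑ r, (if ¬ G1 p then tt ρ p q r else 0) =
      ∑ p with ¬ G1 p, wt ρ p := by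
    rw [Finset.sum_filter]
    refine Finset.sum_congr rfl fun p _ => ?_
    by_cases hG : G1 p
    · simp [hG]
    simp only [hG, not_false_eq_true, if_true]
    · exact tt_p ρ p
  have e2 : ∑ p : Nat.Partition k, ∑ q, ∑ r, (if ¬ G2 q then tt ρ p q r else 0) =
      ∑ q with ¬ G2 q, wt ρA q := by
    rw [Finset.sum_filter, Finset.sum_comm]
    refine Finset.sum_congr rfl fun p _ => ?_
    by_cases hG : G2 p
    · simp [hG]
    simp only [hG, not_false_eq_true, if_true]
    · exact tt_q hρA p
  have e3 : ∑ p : Nat.Partition k, ∑ q, ∑ r, (if ¬ G3 r then tt ρ p q r else 0) =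
      ∑ r with ¬ G3 r, wt ρB r := by
    rw [Finset.sum_filter]
    have hc : ∀ p : Nat.Partition k, ∑ q, ∑ r, (if ¬ G3 r then tt ρ p q r else 0) =
      ∑ r, ∑ q, (if ¬ G3 r then tt ρ p q r else 0) := fun p => Finset.sum_comm
    simp_rw [hc]
    rw [Finset.sum_comm]
    refine Finset.sum_congr rfl fun p _ => ?_
    by_cases hG : G3 p
    · simp [hG]
    simp only [hG, not_false_eq_true, if_true]
    · exact tt_r hρB p
  rw [e1, e2, e3] at hs
  linarith

end bip
end Kron
end part6

section part7
open Matrix ComplexOrder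
set_option linter.unusedSectionVars false
set_option linter.unusedSimpArgs false
namespace Kron
variable {k : ℕ} {lam mu : ℕ → ℕ} {t s : Fin k → ℕ × ℕ}

lemma down_closed (S : Finset ℕ) (h : ∀ x ∈ S, ∀ y, y ≤ x → y ∈ S) : S = range S.card := by
  apply Finset.eq_of_subset_of_card_le
  · intro x hx
    have : range (x + 1) ⊆ S := fun y hy => h x hx y (by simp at hy; omega)
    have := Finset.card_le_card this
    simp at *
    omega
  · simp

lemma prod_le_range {R : ℕ → ℝ} (hR : Antitone R) (h0 : ∀ i, 0 ≤ R i) (S : Finset ℕ) :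
    ∏ s ∈ S, R s ≤ ∏ i ∈ range S.card, R i := by
  induction S using Finset.induction_on_max with
  | empty => simp
  | insert a s ha ih =>
    have hn : a ∉ s := fun h => lt_irrefl _ (ha a h)
    rw [Finset.prod_insert hn, Finset.card_insert_of_notMem hn, Finset.prod_range_succ, mul_comm]
    have hc : s.card ≤ a := by
      have : s ⊆ range a := fun x hx => by simpa using ha x hx
      simpa using Finset.card_le_card this
    exact mul_le_mul ih (hR hc) (h0 _) (Finset.prod_nonneg fun i _ => h0 i)

lemma prod_col_le (ht : Tab k lam t) {R : ℕ → ℝ} (hR : Antitone R) (h0 : ∀ i, 0 ≤ R i)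
    (v : Fin k → ℕ) (hv : ∀ i j, i ≠ j → (t i).2 = (t j).2 → v i ≠ v j) :
    ∏ j, R (v j) ≤ ∏ j, R (t j).1 := by
  rw [← Finset.prod_fiberwise_of_maps_to (s := univ) (t := range k) (g := fun j => (t j).2)
      (fun j _ => by simpa using (ht.lt j).2.1) (fun j => R (v j)),
    ← Finset.prod_fiberwise_of_maps_to (s := univ) (t := range k) (g := fun j => (t j).2)
      (fun j _ => by simpa using (ht.lt j).2.1) (fun j => R (t j).1)]
  refine Finset.prod_le_prod (fun c _ => Finset.prod_nonneg fun j _ => h0 _) fun c _ => ?_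
  set J := univ.filter (fun j : Fin k => (t j).2 = c) with hJ
  have i1 : Set.InjOn v J := by
    intro i hi j hj hij
    by_contra hne
    simp [hJ] at hi hj
    exact hv i j hne (hi.trans hj.symm) hij
  have i2 : Set.InjOn (fun j => (t j).1) J := by
    intro i hi j hj hij
    simp [hJ] at hi hj
    exact ht.inj (Prod.ext hij (hi.trans hj.symm))
  rw [← Finset.prod_image (f := R) i1, ← Finset.prod_image (f := R) i2]
  refine (prod_le_range hR h0 _).trans ?_
  rw [Finset.card_image_of_injOn i1, ← Finset.card_image_of_injOn i2]
  apply le_of_eq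
  rw [← down_closed]
  intro x hx y hy
  simp only [Finset.mem_image, hJ, Finset.mem_filter, Finset.mem_univ, true_and] at hx ⊢
  obtain ⟨j, hj, rfl⟩ := hx
  have h1 := (ht.lt j).2.2
  have h2 := ht.part.1 hy
  obtain ⟨i, hi⟩ := ht.surj (r := y) (c := c) (by omega)
  exact ⟨i, by rw [hi], by rw [hi]⟩

section word
variable {d : ℕ}

lemma toMat_sg_mul (σ : SS k) (x : GA k) (w u : Fin k → Fin d) :
    toMat (wact k (Fin d)) (sg σ * x) w u = toMat (wact k (Fin d)) x (fun j => w (σ j)) u := by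
  rw [map_mul, Matrix.mul_apply]
  simp only [sg, toMat_single, ite_mul, one_mul, zero_mul]
  have h1 : ∀ v, (wact k (Fin d) σ v = w) ↔ v = (wact k (Fin d) σ).symm w := by
    intro v; rw [Equiv.eq_symm_apply]
  simp only [h1, Finset.sum_ite_eq', Finset.mem_univ, if_true]
  rfl

lemma diag_bound (ht : Tab k lam t) {R : ℕ → ℝ} (hR : Antitone R) (h0 : ∀ i, 0 ≤ R i)
    (w : Fin k → Fin d) (hw : toMat (wact k (Fin d)) (yP k t) w w ≠ 0) :
    ∏ j, R (w j) ≤ ∏ j, R (t j).1 := by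
  by_contra hcon
  apply hw
  rw [yP, yz, map_smul, map_sum, Matrix.smul_apply, Matrix.sum_apply, Finset.sum_eq_zero, smul_zero]
  intro σ _
  have hz : ∀ u, toMat (wact k (Fin d)) (colS k t) (fun j => w (σ j)) u = 0 := by
    intro u
    by_cases hv : ∀ i j, i ≠ j → (t i).2 = (t j).2 → ((w (σ i) : Fin d) : ℕ) ≠ w (σ j)
    · exfalso
      apply hcon
      have := prod_col_le ht hR h0 (fun j => ((w (σ j) : Fin d) : ℕ)) hv
      rwa [Equiv.prod_comp σ (fun j => R (w j))] at this
    · push Not at hv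
      obtain ⟨i, j, hij, hc, he⟩ := hv
      have h1 := sg_colS (swap_col hc)
      have h2 := congrArg (fun x => toMat (wact k (Fin d)) x (fun j => w (σ j)) u) h1
      simp only [toMat_sg_mul, map_smul, Matrix.smul_apply, Equiv.Perm.sign_swap hij] at h2
      have h3 : (fun l => w (σ (Equiv.swap i j l))) = fun l => w (σ l) := by
        funext l
        rw [Equiv.swap_apply_def]
        split_ifs with e1 e2
        · rw [e1]; exact (Fin.ext he).symm
        · rw [e2]; exact (Fin.ext he)
        · rfl
      rw [h3] at h2
      simp at h2
      exact self_eq_neg.1 h2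
  rw [yp, youngSym_eq, mul_smul_comm, smul_mul_assoc, map_smul, Matrix.smul_apply, ← mul_assoc,
    mul_assoc, map_mul, Matrix.mul_apply, Finset.sum_eq_zero, smul_zero]
  intro u _
  rw [toMat_sg_mul, hz, zero_mul]

lemma wtd_le (ht : Tab k lam t) {R : ℕ → ℝ} (hR : Antitone R) (h0 : ∀ i, 0 ≤ R i) :
    (toMat (wact k (Fin d)) (yP k t) * K k (diagonal fun i : Fin d => (R i : ℂ))).trace.re ≤
      (∏ j, R (t j).1) * (toMat (wact k (Fin d)) (yP k t)).trace.re := by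
  set P := toMat (wact k (Fin d)) (yP k t) with hP
  have hH : P.IsHermitian := yP_SA.toMat _
  have hI : P * P = P := by rw [hP, ← map_mul, yP_idem ht]
  have hK : K k (diagonal fun i : Fin d => (R i : ℂ)) = diagonal fun w => ((∏ j, R (w j) : ℝ) : ℂ) := by
    ext u v
    rw [K_apply]
    by_cases h : u = v
    · subst h; simp
    · rw [diagonal_apply_ne _ h]
      obtain ⟨j, hj⟩ := Function.ne_iff.1 h
      exact Finset.prod_eq_zero (Finset.mem_univ j) (diagonal_apply_ne _ hj)
  rw [hK, Matrix.trace, Matrix.trace, Complex.re_sum, Complex.re_sum, Finset.mul_sum]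
  refine Finset.sum_le_sum fun w _ => ?_
  rw [diag_apply, diag_apply, mul_diagonal, Complex.re_mul_ofReal, mul_comm]
  have hd := herm_idem_diag hH hI w
  by_cases hz : P w w = 0
  · simp [hz]
  · refine mul_le_mul_of_nonneg_right (diag_bound ht hR h0 w hz) ?_
    rw [hd, Complex.ofReal_re]
    positivity

end word

lemma rowS_sq : rowS k t * rowS k t = ((rowSet k t).card : ℂ) • rowS k t := by
  conv_lhs => lhs; rw [rowS]
  rw [Finset.sum_mul, Finset.sum_congr rfl fun π h => sg_rowS h]
  simp [Nat.cast_smul_eq_nsmul]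

def rowP (k : ℕ) (t : Fin k → ℕ × ℕ) : GA k := ((rowSet k t).card : ℂ)⁻¹ • rowS k t

lemma row_card_pos : 0 < (rowSet k t).card := Finset.card_pos.2 ⟨1, one_mem_row⟩
lemma row_card_ne : ((rowSet k t).card : ℂ) ≠ 0 := Nat.cast_ne_zero.2 row_card_pos.ne'

lemma rowP_idem : rowP k t * rowP k t = rowP k t := by
  rw [rowP, smul_mul_smul_comm, rowS_sq, smul_smul]
  congr 1
  have := row_card_ne (t := t)
  field_simp

lemma yp_rowP : yp k t = yp k t * rowP k t := by
  rw [rowP, yp, youngSym_eq, smul_mul_smul_comm, mul_assoc, rowS_sq, mul_smul_comm, smul_smul]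
  congr 1
  have := row_card_ne (t := t)
  field_simp

lemma rowP_one : (rowP k t).coeff 1 = ((rowSet k t).card : ℂ)⁻¹ := by
  simp [rowP, rowS, sg, MonoidAlgebra.coeff_sum, Finsupp.single_apply, one_mem_row]

lemma tr_yp_le {X : Type} [Fintype X] [DecidableEq X] (act : SS k →* Equiv.Perm X) (ht : Tab k lam t) :
    (toMat act (yp k t)).trace.re ≤ (toMat act (rowP k t)).trace.re :=
  idem_trace_le (by rw [← map_mul, yp_idem ht]) (by rw [← map_mul, rowP_idem]) (toMat act (yp k t))
    (by rw [← map_mul, ← yp_rowP])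

lemma yn_inv_re (ht : Tab k lam t) : 0 ≤ ((yn k t)⁻¹).re ∧ ((yn k t)⁻¹).re ≤ ((rowSet k t).card : ℝ)⁻¹ := by
  have h1 := tr_yp_le (reg (SS k)) ht
  have h2 := idem_trace (toMat (reg (SS k)) (yp k t)) (by rw [← map_mul, yp_idem ht])
  rw [trace_reg, yp_one ht] at h2
  rw [trace_reg, trace_reg, yp_one ht, rowP_one] at h1
  have hc : (0:ℝ) < (Fintype.card (SS k) : ℝ) := Nat.cast_pos.2 Fintype.card_pos
  have e : ∀ z : ℂ, ((Fintype.card (SS k) : ℂ) * z).re = (Fintype.card (SS k) : ℝ) * z.re := by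
    intro z
    rw [← Complex.ofReal_natCast, Complex.re_ofReal_mul]
  rw [e, e] at h1
  have h2' := congrArg Complex.re h2
  rw [e, Complex.natCast_re] at h2'
  constructor
  · by_contra hneg
    have := mul_neg_of_pos_of_neg hc (not_le.1 hneg)
    rw [h2'] at this
    exact absurd this (not_lt.2 (Nat.cast_nonneg _))
  · have := le_of_mul_le_mul_left h1 hc
    rwa [← Complex.ofReal_natCast, ← Complex.ofReal_inv, Complex.ofReal_re] at this

lemma tr_yP_le {X : Type} [Fintype X] [DecidableEq X] (act : SS k →* Equiv.Perm X) (ht : Tab k lam t) :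
    (toMat act (yP k t)).trace.re ≤
      ((k ! : ℝ) * ((rowSet k t).card : ℝ)⁻¹) * (toMat act (rowP k t)).trace.re := by
  have h1 : (toMat act (yP k t)).trace = (yn k t)⁻¹ * ((k ! : ℂ) * (toMat act (yp k t)).trace) := by
    rw [yP, yz, map_smul, Matrix.trace_smul, map_sum, Matrix.trace_sum, smul_eq_mul]
    congr 1
    rw [Finset.sum_congr rfl (fun σ _ => ?_), Finset.sum_const, Finset.card_univ,
      Fintype.card_perm, Fintype.card_fin, nsmul_eq_mul]
    rw [map_mul, Matrix.trace_mul_comm, ← map_mul, ← mul_assoc, sg_mul, inv_mul_cancel, sg_one, one_mul]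
  have h2 := idem_trace (toMat act (yp k t)) (by rw [← map_mul, yp_idem ht])
  have h3 := tr_yp_le act ht
  have h4 := yn_inv_re ht
  have h5 : (yn k t)⁻¹ = (((yn k t)⁻¹).re : ℂ) := by
    rw [eq_comm, ← Complex.conj_eq_iff_re, map_inv₀, yn_real]
  rw [h2, Complex.natCast_re] at h3
  rw [h1, h2, h5]
  have h6 : ((((yn k t)⁻¹).re : ℂ) * ((k ! : ℂ) * ((toMat act (yp k t)).rank : ℂ))).re =
      ((yn k t)⁻¹).re * ((k ! : ℝ) * ((toMat act (yp k t)).rank : ℝ)) := by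
    rw [Complex.re_ofReal_mul]; congr 1; norm_cast
  rw [h6]
  calc _ ≤ ((rowSet k t).card : ℝ)⁻¹ * ((k ! : ℝ) * (toMat act (rowP k t)).trace.re) := by
        refine mul_le_mul h4.2 (mul_le_mul_of_nonneg_left h3 (Nat.cast_nonneg _)) (mul_nonneg (Nat.cast_nonneg _) (Nat.cast_nonneg _)) (inv_nonneg.2 (Nat.cast_nonneg _))
    _ = _ := by ring

end Kron
end part7

section part8
open Matrix ComplexOrder
set_option linter.unusedSectionVars false
set_option linter.unusedSimpArgs false
namespace Kron
variable {k : ℕ} {lam mu : ℕ → ℕ} {t s : Fin k → ℕ × ℕ} {d : ℕ}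

lemma rowP_coeff (g : SS k) : (rowP k t).coeff g =
    if g ∈ rowSet k t then ((rowSet k t).card : ℂ)⁻¹ else 0 := by
  simp [rowP, rowS, sg, MonoidAlgebra.coeff_sum, Finsupp.single_apply]

def tb (t : Fin k → ℕ × ℕ) (w : Fin k → Fin d) : Fin d × Fin d → Fin (k + 1) := fun c =>
  ⟨(univ.filter fun j => (t j).1 = c.1 ∧ w j = c.2).card, by
    refine Nat.lt_succ_of_le ((Finset.card_le_univ _).trans ?_); simp⟩

lemma tb_perm (hd : ∀ j, (t j).1 < d) {w w0 : Fin k → Fin d} (h : tb t w = tb t w0) :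
    ∃ τ : SS k, ∀ j, (t (τ j)).1 = (t j).1 ∧ w (τ j) = w0 j := by
  have he : ∀ c : ℕ × Fin d, Nonempty ({j // ((t j).1, w0 j) = c} ≃ {j // ((t j).1, w j) = c}) := by
    rintro ⟨i, a⟩
    rw [← Fintype.card_eq, Fintype.card_subtype, Fintype.card_subtype]
    by_cases hi : i < d
    · have := congrArg Fin.val (congrFun h (⟨i, hi⟩, a))
      simp only [tb] at this
      simp only [Prod.mk.injEq]
      exact this.symm
    · have : ∀ v : Fin k → Fin d, (univ.filter fun j => ((t j).1, v j) = (i, a)) = ∅ := by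
        intro v
        rw [Finset.filter_eq_empty_iff]
        intro j _ hj
        have h1 := hd j
        have h2 := congrArg Prod.fst hj
        simp only at h2
        omega
      rw [this, this]
  let e := fun c => (he c).some
  refine ⟨Equiv.ofFiberEquiv e, fun j => ?_⟩
  have := Equiv.ofFiberEquiv_map e j
  exact ⟨(Prod.ext_iff.1 this).1, (Prod.ext_iff.1 this).2⟩

lemma tr_rowP (hd : ∀ j, (t j).1 < d) :
    (toMat (wact k (Fin d)) (rowP k t)).trace.re ≤ ((k : ℝ) + 1) ^ (d * d) := by
  set Z := ((univ : Finset (Fin k → Fin d)) ×ˢ rowSet k t).filter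
    (fun z => wact k (Fin d) z.2 z.1 = z.1) with hZ
  have htr : (toMat (wact k (Fin d)) (rowP k t)).trace = ((rowSet k t).card : ℂ)⁻¹ * (Z.card : ℂ) := by
    rw [Matrix.trace, hZ, Finset.card_filter, Finset.sum_product]
    push_cast
    rw [Finset.mul_sum]
    refine Finset.sum_congr rfl fun w _ => ?_
    rw [diag_apply, toMat_apply, Finset.mul_sum]
    simp only [rowP_coeff, mul_ite, mul_one, mul_zero]
    rw [← Finset.sum_filter_add_sum_filter_not univ (fun g => g ∈ rowSet k t)]
    rw [Finset.sum_eq_zero (s := univ.filter fun g => g ∉ rowSet k t), add_zero]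
    · rw [Finset.filter_univ_mem]
      exact Finset.sum_congr rfl fun g hg => by simp [hg]
    · intro g hg
      simp at hg
      simp [hg]
  have hfib : ∀ c ∈ Z.image (fun z => tb t z.1),
      (Z.filter fun z => tb t z.1 = c).card ≤ (rowSet k t).card := by
    intro c hc
    obtain ⟨⟨w0, π0⟩, -, rfl⟩ := Finset.mem_image.1 hc
    have hex : ∀ w : Fin k → Fin d, ∃ τ : SS k, tb t w = tb t w0 →
        ∀ j, (t (τ j)).1 = (t j).1 ∧ w (τ j) = w0 j := by
      intro w
      by_cases h : tb t w = tb t w0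
      · obtain ⟨τ, hτ⟩ := tb_perm hd h; exact ⟨τ, fun _ => hτ⟩
      · exact ⟨1, fun h' => absurd h' h⟩
    choose τ hτ using hex
    have hfix : ∀ z ∈ (Z.filter fun z => tb t z.1 = tb t w0), ∀ j, z.1 ((z.2 * τ z.1) j) = w0 j := by
      intro z hz j
      simp only [hZ, Finset.mem_filter, Finset.mem_product, Finset.mem_univ, true_and] at hz
      rw [← (hτ z.1 hz.2 j).2, Equiv.Perm.mul_apply]
      have h5 := congrFun hz.1.2 (z.2 (τ z.1 j))
      rw [wact_apply] at h5
      simpa using h5.symm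
    refine Finset.card_le_card_of_injOn (fun z => z.2 * τ z.1) ?_ ?_
    · intro z hz
      simp only [hZ, Finset.coe_filter, Finset.mem_filter, Finset.mem_product, Finset.mem_univ, true_and, Set.mem_ofPred_eq] at hz
      have h1 : τ z.1 ∈ rowSet k t := mem_rowSet.2 fun j => (hτ z.1 hz.2 j).1
      exact (rowSet_mul h1).2 hz.1.1
    · intro z hz z' hz' he
      have h1 := hfix z hz
      have h2 := hfix z' hz'
      simp only at he
      rw [he] at h1
      have hw : z.1 = z'.1 := by
        funext j
        have := (h1 ((z'.2 * τ z'.1)⁻¹ j)).trans (h2 ((z'.2 * τ z'.1)⁻¹ j)).symm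
        generalize z'.2 * τ z'.1 = ρ at this
        simpa using this
      rw [hw] at he
      exact Prod.ext hw (mul_right_cancel he)
  have hcard := Finset.card_le_mul_card_image Z (rowSet k t).card hfib
  have hi : (Z.image (fun z => tb t z.1)).card ≤ (k + 1) ^ (d * d) := by
    refine (Finset.card_le_univ _).trans ?_
    simp
  have hle : Z.card ≤ (rowSet k t).card * (k + 1) ^ (d * d) :=
    hcard.trans (Nat.mul_le_mul_left _ hi)
  have hle' : (Z.card : ℝ) ≤ (rowSet k t).card * ((k : ℝ) + 1) ^ (d * d) := by exact_mod_cast hle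
  have : (toMat (wact k (Fin d)) (rowP k t)).trace = (((rowSet k t).card : ℝ)⁻¹ * (Z.card : ℝ) : ℝ) := by
    rw [htr]; push_cast; rfl
  rw [this, Complex.ofReal_re]
  have hpos : (0 : ℝ) < (rowSet k t).card := Nat.cast_pos.2 row_card_pos
  rw [inv_mul_le_iff₀ hpos]
  exact hle'

/-- Multinomial bound. -/
lemma multinom {q : ℕ → ℝ} (hq : ∀ i, 0 ≤ q i) (hd : ∀ j, (t j).1 < d)
    (hs : ∑ i ∈ range d, q i = 1) :
    ((k ! : ℝ) * ((rowSet k t).card : ℝ)⁻¹) * ∏ j, q (t j).1 ≤ 1 := by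
  let f : SS k → (Fin k → Fin d) := fun π j => ⟨(t (π j)).1, hd _⟩
  set O := (univ : Finset (SS k)).image f with hO
  have hfib : ∀ c ∈ O, ((univ : Finset (SS k)).filter fun π => f π = c).card ≤ (rowSet k t).card := by
    intro c hc
    obtain ⟨π0, -, rfl⟩ := Finset.mem_image.1 hc
    refine Finset.card_le_card_of_injOn (fun π => π * π0⁻¹) ?_ ?_
    · intro π hπ
      simp only [Finset.coe_filter, Finset.mem_univ, true_and, Set.mem_ofPred_eq] at hπ
      refine mem_rowSet.2 fun j => ?_
      have := congrArg Fin.val (congrFun hπ (π0⁻¹ j))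
      simpa [f] using this
    · intro a _ b _ h
      exact mul_right_cancel h
  have h1 := Finset.card_le_mul_card_image (univ : Finset (SS k)) (rowSet k t).card hfib
  rw [Finset.card_univ, Fintype.card_perm, Fintype.card_fin, ← hO] at h1
  have h1' : (k ! : ℝ) ≤ (rowSet k t).card * (O.card : ℝ) := by exact_mod_cast h1
  have hpos : (0 : ℝ) < (rowSet k t).card := Nat.cast_pos.2 row_card_pos
  have h2 : (k ! : ℝ) * ((rowSet k t).card : ℝ)⁻¹ ≤ O.card := by
    rw [mul_inv_le_iff₀ hpos, mul_comm]; exact h1'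
  have hQ : 0 ≤ ∏ j, q (t j).1 := Finset.prod_nonneg fun j _ => hq _
  refine (mul_le_mul_of_nonneg_right h2 hQ).trans ?_
  have h3 : ∑ o ∈ O, ∏ j, q (o j : ℕ) = (O.card : ℝ) * ∏ j, q (t j).1 := by
    rw [Finset.sum_congr rfl (g := fun _ => ∏ j, q (t j).1), Finset.sum_const, nsmul_eq_mul]
    intro o ho
    obtain ⟨π, -, rfl⟩ := Finset.mem_image.1 ho
    exact Equiv.prod_comp π (fun j => q (t j).1)
  rw [← h3]
  refine (Finset.sum_le_univ_sum_of_nonneg fun o => Finset.prod_nonneg fun j _ => hq _).trans ?_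
  have h := Finset.prod_univ_sum (fun _ : Fin k => (univ : Finset (Fin d))) (fun _ i => q (i : ℕ))
  simp only [Finset.prod_const, Finset.card_univ, Fintype.card_fin, Fintype.piFinset_univ] at h
  rw [← h, Fin.sum_univ_eq_sum_range (fun i => q i), hs, one_pow]

end Kron
end part8

section part9
open Matrix ComplexOrder
set_option linter.unusedSectionVars false
set_option linter.unusedSimpArgs false
namespace Kron
variable {k : ℕ} {lam mu : ℕ → ℕ} {t s : Fin k → ℕ × ℕ} {d : ℕ}

lemma amgm (hk : 0 < k) (x : Fin k → ℝ) (hx : ∀ j, 0 ≤ x j) :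
    ∏ j, x j ≤ (∑ j, (k : ℝ)⁻¹ * x j) ^ k := by
  have hk' : (k : ℝ) ≠ 0 := Nat.cast_ne_zero.2 hk.ne'
  have h := Real.geom_mean_le_arith_mean_weighted univ (fun _ : Fin k => (k : ℝ)⁻¹) x
    (fun _ _ => by positivity) (by simp [hk']) (fun j _ => hx j)
  have h2 := pow_le_pow_left₀ (Finset.prod_nonneg fun j _ => Real.rpow_nonneg (hx j) _) h k
  refine le_trans (le_of_eq ?_) h2
  rw [← Finset.prod_pow]
  refine Finset.prod_congr rfl fun j _ => ?_
  rw [← Real.rpow_natCast, ← Real.rpow_mul (hx j), inv_mul_cancel₀ hk', Real.rpow_one]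

lemma sum_lam (h : IsPartitionOf k lam) (hd : ∀ i, d ≤ i → lam i = 0) :
    ∑ i ∈ range d, lam i = k := by
  have h1 : ∑ i ∈ range d, lam i = ∑ i ∈ range (max d k), lam i :=
    Finset.sum_subset (by simp) (fun i _ hi => hd i (by simpa using hi))
  have h2 : ∑ i ∈ range k, lam i = ∑ i ∈ range (max d k), lam i :=
    Finset.sum_subset (by simp) (fun i _ hi => h.2.1 i (by simpa using hi))
  rw [h1, ← h2, h.2.2]

lemma row_lt (ht : Tab k lam t) (hd : ∀ i, d ≤ i → lam i = 0) (j : Fin k) : (t j).1 < d := by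
  by_contra h
  have := (ht.lt j).2.2
  rw [hd _ (not_lt.1 h)] at this
  omega

lemma mul_sqrt_div {a b : ℝ} (ha : 0 ≤ a) (hb : 0 ≤ b) : b * √(a / b) = √(a * b) := by
  rcases hb.eq_or_lt with rfl | hb
  · simp
  · rw [Real.sqrt_div ha, Real.sqrt_mul ha]
    have h1 := Real.mul_self_sqrt hb.le
    have h2 : √b ≠ 0 := (Real.sqrt_pos.2 hb).ne'
    field_simp
    rw [pow_two, h1]; ring

lemma fid_bound (ht : Tab k lam t) (hk : 0 < k) {R : ℕ → ℝ} (h0 : ∀ i, 0 ≤ R i)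
    (hd : ∀ i, d ≤ i → lam i = 0) :
    ((k ! : ℝ) * ((rowSet k t).card : ℝ)⁻¹) * ∏ j, R (t j).1 ≤
      (∑ i ∈ range d, √(R i * ((lam i : ℝ) / k))) ^ (2 * k) := by
  set q : ℕ → ℝ := fun i => (lam i : ℝ) / k with hq
  have hkr : (0 : ℝ) < k := Nat.cast_pos.2 hk
  have hq0 : ∀ i, 0 ≤ q i := fun i => by positivity
  have hrow := row_lt ht hd
  have hqs : ∑ i ∈ range d, q i = 1 := by
    rw [hq, ← Finset.sum_div, ← Nat.cast_sum, sum_lam ht.part hd, div_self hkr.ne']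
  have hm := multinom hq0 hrow hqs
  have hqp : ∀ j, 0 < q (t j).1 := fun j => by
    have := (ht.lt j).2.2
    have : (0 : ℝ) < lam (t j).1 := Nat.cast_pos.2 (by omega)
    positivity
  have hQ : 0 < ∏ j, q (t j).1 := Finset.prod_pos fun j _ => hqp j
  have h1 : ((k ! : ℝ) * ((rowSet k t).card : ℝ)⁻¹) * ∏ j, R (t j).1 ≤ ∏ j, (R (t j).1 / q (t j).1) := by
    rw [Finset.prod_div_distrib, le_div_iff₀ hQ]
    have := mul_le_mul_of_nonneg_left hm (Finset.prod_nonneg fun j (_ : j ∈ univ) => h0 (t j).1)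
    linarith
  refine h1.trans ?_
  have h2 : ∏ j, (R (t j).1 / q (t j).1) = (∏ j, √(R (t j).1 / q (t j).1)) ^ 2 := by
    rw [← Finset.prod_pow]
    refine Finset.prod_congr rfl fun j _ => ?_
    rw [Real.sq_sqrt (div_nonneg (h0 _) (hq0 _))]
  have h3 := amgm hk (fun j => √(R (t j).1 / q (t j).1)) (fun j => Real.sqrt_nonneg _)
  have h4 : ∑ j, (k : ℝ)⁻¹ * √(R (t j).1 / q (t j).1) = ∑ i ∈ range d, √(R i * q i) := by
    rw [← Finset.sum_fiberwise_of_maps_to (s := univ) (t := range d) (g := fun j => (t j).1)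
      (fun j _ => by simpa using hrow j)]
    refine Finset.sum_congr rfl fun i _ => ?_
    rw [Finset.sum_congr rfl (g := fun _ => (k : ℝ)⁻¹ * √(R i / q i)) (fun j hj => by
      simp at hj; rw [hj]), Finset.sum_const, ht.card_row, nsmul_eq_mul, ← mul_sqrt_div (h0 i) (hq0 i)]
    simp only [hq]; ring
  rw [h2, mul_comm 2 k, pow_mul, ← h4]
  exact pow_le_pow_left₀ (Finset.prod_nonneg fun j _ => Real.sqrt_nonneg _) h3 2

lemma fid_le {R q : ℕ → ℝ} (h0 : ∀ i, 0 ≤ R i) (hq : ∀ i, 0 ≤ q i)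
    (hR1 : ∑ i ∈ range d, R i = 1) (hq1 : ∑ i ∈ range d, q i = 1) {ε : ℝ} (hε : 0 ≤ ε)
    {i : ℕ} (hi : i < d) (hbad : ε ≤ |q i - R i|) :
    ∑ i ∈ range d, √(R i * q i) ≤ 1 - ε ^ 2 / 8 := by
  have e : ∀ i, √(R i * q i) = (R i + q i) / 2 - (√(R i) - √(q i)) ^ 2 / 2 := by
    intro i
    have h1 := Real.sq_sqrt (h0 i)
    have h2 := Real.sq_sqrt (hq i)
    rw [Real.sqrt_mul (h0 i)]
    nlinarith
  simp only [e]
  rw [Finset.sum_sub_distrib, ← Finset.sum_div, ← Finset.sum_div, Finset.sum_add_distrib, hR1, hq1]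
  have h1 : (√(R i) - √(q i)) ^ 2 ≤ ∑ i ∈ range d, (√(R i) - √(q i)) ^ 2 :=
    Finset.single_le_sum (f := fun i => (√(R i) - √(q i)) ^ 2) (fun _ _ => sq_nonneg _) (by simpa using hi)
  have hRi : R i ≤ 1 := hR1 ▸ Finset.single_le_sum (f := R) (fun i _ => h0 i) (by simpa using hi)
  have hqi : q i ≤ 1 := hq1 ▸ Finset.single_le_sum (f := q) (fun i _ => hq i) (by simpa using hi)
  have a1 : √(R i) ≤ 1 := Real.sqrt_le_one.2 hRi
  have a2 : √(q i) ≤ 1 := Real.sqrt_le_one.2 hqi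
  have b1 := Real.sqrt_nonneg (R i)
  have b2 := Real.sqrt_nonneg (q i)
  have h3 : ε ≤ 2 * |√(R i) - √(q i)| := by
    refine hbad.trans ?_
    have : q i - R i = -((√(R i) - √(q i)) * (√(R i) + √(q i))) := by
      have h1 := Real.sq_sqrt (h0 i)
      have h2 := Real.sq_sqrt (hq i)
      nlinarith
    rw [this, abs_neg, abs_mul, mul_comm, abs_of_nonneg (a := √(R i) + √(q i)) (by linarith)]
    exact mul_le_mul_of_nonneg_right (by linarith) (abs_nonneg _)
  have h4 : ε ^ 2 ≤ 4 * (√(R i) - √(q i)) ^ 2 := by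
    rw [← sq_abs (√(R i) - √(q i))]
    nlinarith [abs_nonneg (√(R i) - √(q i))]
  linarith

/-- weight bound for a bad partition -/
lemma wt_bad (hk : 0 < k) {R : ℕ → ℝ} (hR : Antitone R) (h0 : ∀ i, 0 ≤ R i)
    (hR1 : ∑ i ∈ range d, R i = 1) (p : Nat.Partition k) {ε : ℝ} (hε : 0 ≤ ε)
    (hd : ∀ i, d ≤ i → lamOf p i = 0)
    (hbad : ∃ i, i < d ∧ ε ≤ |(lamOf p i : ℝ) / k - R i|) :
    wt (diagonal fun i : Fin d => (R i : ℂ)) p ≤ ((k : ℝ) + 1) ^ (d * d) * (1 - ε ^ 2 / 8) ^ (2 * k) := by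
  obtain ⟨i, hi, hb⟩ := hbad
  have ht := tabOf_tab p
  have hkr : (0 : ℝ) < k := Nat.cast_pos.2 hk
  have hqs : ∑ i ∈ range d, (lamOf p i : ℝ) / k = 1 := by
    rw [← Finset.sum_div, ← Nat.cast_sum, sum_lam ht.part hd, div_self hkr.ne']
  have hF := fid_le (q := fun i => (lamOf p i : ℝ) / k) h0 (fun i => by positivity) hR1 hqs hε hi hb
  have hF0 : 0 ≤ ∑ i ∈ range d, √(R i * ((lamOf p i : ℝ) / k)) :=
    Finset.sum_nonneg fun i _ => Real.sqrt_nonneg _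
  have h1 := wtd_le (d := d) ht hR h0
  have h2 := tr_yP_le (wact k (Fin d)) ht
  have h3 := tr_rowP (d := d) (row_lt ht hd)
  have h4 := fid_bound ht hk h0 hd
  have hP : 0 ≤ ∏ j, R (tabOf p j).1 := Finset.prod_nonneg fun j _ => h0 _
  have hC : (0 : ℝ) ≤ (k ! : ℝ) * ((rowSet k (tabOf p)).card : ℝ)⁻¹ :=
    mul_nonneg (Nat.cast_nonneg _) (inv_nonneg.2 (Nat.cast_nonneg _))
  rw [wt, PP]
  calc _ ≤ _ := h1
    _ ≤ (∏ j, R (tabOf p j).1) * (((k ! : ℝ) * ((rowSet k (tabOf p)).card : ℝ)⁻¹) * ((k : ℝ) + 1) ^ (d * d)) :=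
        mul_le_mul_of_nonneg_left (h2.trans (mul_le_mul_of_nonneg_left h3 hC)) hP
    _ = ((k : ℝ) + 1) ^ (d * d) * (((k ! : ℝ) * ((rowSet k (tabOf p)).card : ℝ)⁻¹) * ∏ j, R (tabOf p j).1) := by ring
    _ ≤ _ := mul_le_mul_of_nonneg_left (h4.trans (pow_le_pow_left₀ hF0 hF _)) (by positivity)

lemma wt_long {R : ℕ → ℝ} (hR : Antitone R) (h0 : ∀ i, 0 ≤ R i) (hRd : ∀ i, d ≤ i → R i = 0)
    (p : Nat.Partition k) (hd : ¬ ∀ i, d ≤ i → lamOf p i = 0) :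
    wt (diagonal fun i : Fin d => (R i : ℂ)) p ≤ 0 := by
  push Not at hd
  obtain ⟨i, hi, hne⟩ := hd
  have ht := tabOf_tab p
  obtain ⟨j, hj⟩ := ht.surj (r := i) (c := 0) (by omega)
  have h1 := wtd_le (d := d) ht hR h0
  rw [Finset.prod_eq_zero (Finset.mem_univ j) (by rw [hj]; exact hRd i hi), zero_mul] at h1
  exact h1

def Good (d : ℕ) (R : ℕ → ℝ) (ε : ℝ) (p : Nat.Partition k) : Prop :=
  (∀ i, d ≤ i → lamOf p i = 0) ∧ ∀ i, i < d → |(lamOf p i : ℝ) / k - R i| < ε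

open Classical in
lemma bad_sum (hk : 0 < k) {R : ℕ → ℝ} (hR : Antitone R) (h0 : ∀ i, 0 ≤ R i)
    (hRd : ∀ i, d ≤ i → R i = 0)
    (hR1 : ∑ i ∈ range d, R i = 1) {ε : ℝ} (hε : 0 ≤ ε) :
    ∑ p : Nat.Partition k with ¬ Good d R ε p, wt (diagonal fun i : Fin d => (R i : ℂ)) p ≤
      ((k : ℝ) + 1) ^ (d + d * d) * ((1 - ε ^ 2 / 8) ^ 2) ^ k := by
  set S := (univ : Finset (Nat.Partition k)).filter (fun p => ∀ i, d ≤ i → lamOf p i = 0) with hS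
  have hcard : (S.card : ℝ) ≤ ((k : ℝ) + 1) ^ d := by
    have : S.card ≤ Fintype.card (Fin d → Fin (k + 1)) := by
      rw [← Finset.card_univ]
      refine Finset.card_le_card_of_injOn (fun p i => ⟨lamOf p i, Nat.lt_succ_of_le (part_le (lamOf_part p) i)⟩)
        (fun _ _ => by simp) ?_
      intro p hp q hq h
      simp only [hS, Finset.coe_filter, Finset.mem_univ, true_and, Set.mem_ofPred_eq] at hp hq
      apply lamOf_inj
      funext i
      by_cases hi : i < d
      · exact congrArg Fin.val (congrFun h ⟨i, hi⟩)
      · rw [hp i (by omega), hq i (by omega)]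
    simp at this
    exact_mod_cast this
  set b : ℝ := ((k : ℝ) + 1) ^ (d * d) * (1 - ε ^ 2 / 8) ^ (2 * k) with hb
  have hb0 : 0 ≤ b := mul_nonneg (by positivity) (by rw [pow_mul]; positivity)
  have h1 : ∀ p ∈ (univ : Finset (Nat.Partition k)).filter (fun p => ¬ Good d R ε p),
      wt (diagonal fun i : Fin d => (R i : ℂ)) p ≤ if p ∈ S then b else 0 := by
    intro p hp
    simp only [Finset.mem_filter, Finset.mem_univ, true_and] at hp
    by_cases hpS : ∀ i, d ≤ i → lamOf p i = 0
    · rw [if_pos (by simpa [hS] using hpS)]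
      refine wt_bad hk hR h0 hR1 p hε hpS ?_
      by_contra hcon
      push Not at hcon
      exact hp ⟨hpS, hcon⟩
    · rw [if_neg (by simpa [hS] using hpS)]
      exact wt_long hR h0 hRd p hpS
  refine (Finset.sum_le_sum h1).trans ?_
  refine (Finset.sum_le_univ_sum_of_nonneg (fun p => by split_ifs <;> simp [hb0])).trans ?_
  rw [Finset.sum_ite_mem, Finset.univ_inter, Finset.sum_const, nsmul_eq_mul]
  refine (mul_le_mul_of_nonneg_right hcard hb0).trans (le_of_eq ?_)
  rw [hb, pow_add, ← pow_mul, mul_assoc]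

open Filter in
lemma tend (N : ℕ) {c : ℝ} (h0 : 0 ≤ c) (h1 : c < 1) :
    Tendsto (fun k : ℕ => ((k : ℝ) + 1) ^ N * c ^ k) atTop (nhds 0) := by
  rcases h0.eq_or_lt with rfl | hc
  · refine tendsto_const_nhds.congr' ?_
    filter_upwards [eventually_gt_atTop 0] with k hk
    simp [hk.ne']
  · have h := (tendsto_pow_const_mul_const_pow_of_abs_lt_one N (r := c) (by rwa [abs_of_nonneg h0])).comp
      (tendsto_add_atTop_nat 1)
    have h2 := h.const_mul c⁻¹
    rw [mul_zero] at h2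
    refine h2.congr fun k => ?_
    simp only [Function.comp]
    push_cast
    rw [pow_succ]
    field_simp

end Kron
end part9

section part10
open Matrix ComplexOrder
set_option linter.unusedSectionVars false
set_option linter.unusedSimpArgs false
namespace Kron

def extR {d : ℕ} (s : Fin d → ℝ) (i : ℕ) : ℝ := if h : i < d then s ⟨i, h⟩ else 0

open Filter Classical in
lemma ev_bad {ι : Type} [Fintype ι] [DecidableEq ι] {d : ℕ} (M : Matrix ι ι ℂ) (hM : M.PosSemidef)
    (hMh : M.IsHermitian) (htr : M.trace = 1) (e : Fin d ≃ ι) (s : Fin d → ℝ) (hs : ∀ i, s i = hMh.eigenvalues (e i))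
    (ha : Antitone s) {ε : ℝ} (hε : 0 < ε) (hε1 : ε ≤ 1) :
    ∀ᶠ k : ℕ in atTop, ∑ p : Nat.Partition k with ¬ Good d (extR s) ε p, wt M p < 1 / 3 := by
  have hs0 : ∀ i, 0 ≤ s i := fun i => by rw [hs]; exact hM.eigenvalues_nonneg _
  have h0 : ∀ i, 0 ≤ extR s i := by
    intro i; rw [extR]; split_ifs
    · exact hs0 _
    · exact le_rfl
  have hR : Antitone (extR s) := by
    intro i j hij
    by_cases hj : j < d
    · rw [extR, extR, dif_pos hj, dif_pos (by omega)]
      exact ha hij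
    · rw [extR, dif_neg hj]; exact h0 i
  have hRd : ∀ i, d ≤ i → extR s i = 0 := fun i hi => by rw [extR, dif_neg (by omega)]
  have hRs : ∀ i : Fin d, extR s i = s i := fun i => by rw [extR, dif_pos i.2]
  have hR1 : ∑ i ∈ range d, extR s i = 1 := by
    rw [← Fin.sum_univ_eq_sum_range]
    simp only [hRs, hs]
    rw [Equiv.sum_comp e]
    have := hMh.trace_eq_sum_eigenvalues
    rw [htr] at this
    have h2 := congrArg Complex.re this
    simpa using h2.symm
  have hwt : ∀ k (p : Nat.Partition k), wt M p = wt (diagonal fun i : Fin d => (extR s i : ℂ)) p := by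
    intro k p
    rw [wt, wt, trace_spec M hMh e s hs]
    simp only [hRs]
  have ht := tend (d + d * d) (c := (1 - ε ^ 2 / 8) ^ 2) (sq_nonneg _) (by
    have : ε ^ 2 ≤ 1 := by nlinarith
    have : 0 < ε ^ 2 := by positivity
    nlinarith)
  filter_upwards [ht.eventually (gt_mem_nhds (show (0:ℝ) < 1 / 3 by norm_num)), eventually_gt_atTop 0] with k hk hk0
  refine lt_of_le_of_lt ?_ hk
  simp only [hwt]
  exact bad_sum hk0 hR h0 hRd hR1 hε.le

lemma ptrace_psd {A B : Type} [Fintype A] [Fintype B] {ρ : Matrix (A × B) (A × B) ℂ} (h : ρ.PosSemidef)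
    (hρtr : ρ.trace = 1) {ρA : Matrix A A ℂ}
    (hρA : ∀ a a', ρA a a' = ∑ b, ρ (a, b) (a', b)) : ρA.PosSemidef ∧ ρA.trace = 1 := by
  constructor
  · have : ρA = ∑ b, ρ.submatrix (fun a => (a, b)) (fun a => (a, b)) := by
      ext a a'; rw [hρA, Matrix.sum_apply]; rfl
    rw [this]
    exact Matrix.posSemidef_sum _ fun b _ => h.submatrix _
  · rw [← hρtr, Matrix.trace, Matrix.trace, Fintype.sum_prod_type]
    simp [hρA]

lemma ptrace_psd' {A B : Type} [Fintype A] [Fintype B] {ρ : Matrix (A × B) (A × B) ℂ} (h : ρ.PosSemidef)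
    (hρtr : ρ.trace = 1) {ρB : Matrix B B ℂ}
    (hρB : ∀ b b', ρB b b' = ∑ a, ρ (a, b) (a, b')) : ρB.PosSemidef ∧ ρB.trace = 1 := by
  constructor
  · have : ρB = ∑ a, ρ.submatrix (fun b => (a, b)) (fun b => (a, b)) := by
      ext a a'; rw [hρB, Matrix.sum_apply]; rfl
    rw [this]
    exact Matrix.posSemidef_sum _ fun b _ => h.submatrix _
  · rw [← hρtr, Matrix.trace, Matrix.trace, Fintype.sum_prod_type_right]
    simp [hρB]

open Filter in
lemma good_tendsto {d : ℕ} {s : Fin d → ℝ} {kseq : ℕ → ℕ} {p : (j : ℕ) → Nat.Partition (kseq j)}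
    (h : ∀ j : ℕ, Good d (extR s) (1 / ((j : ℝ) + 1)) (p j)) (i : Fin d) :
    Tendsto (fun j => (lamOf (p j) i : ℝ) / (kseq j : ℝ)) atTop (nhds (s i)) := by
  rw [tendsto_iff_dist_tendsto_zero]
  refine squeeze_zero (fun _ => dist_nonneg) (fun j => ?_) tendsto_one_div_add_atTop_nhds_zero_nat
  have := (h j).2 i i.2
  rw [extR, dif_pos i.2] at this
  rw [Real.dist_eq]
  exact this.le

end Kron
end part10

open Filter Matrix ComplexOrder

/-- Main theorem: for every density operator `ρ^{AB}` on `ℂ^m ⊗ ℂ^n` with marginals `ρ^A`,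
`ρ^B`, there is a sequence of triples of partitions `(lam_j, mu_j, nu_j)` of a common size
`k_j` with non-vanishing Kronecker coefficient `g_{lam_j mu_j nu_j}` such that the normalised
partitions converge to `spec ρ^{AB}`, `spec ρ^A` and `spec ρ^B`, respectively. -/
theorem stmt_13 {m n : ℕ} (hm : 0 < m) (hn : 0 < n)
    (chi : (k : ℕ) → (ℕ → ℕ) → Equiv.Perm (Fin k) → ℂ) (hchi : IsCharacterFamily chi)
    (g : (k : ℕ) → (ℕ → ℕ) → (ℕ → ℕ) → (ℕ → ℕ) → ℕ) (hg : IsKroneckerFamily chi g)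
    (ρ : Matrix (Fin m × Fin n) (Fin m × Fin n) ℂ)
    (hρ : ρ.PosSemidef) (hρtr : ρ.trace = 1)
    (ρA : Matrix (Fin m) (Fin m) ℂ)
    (hρA : ∀ a a', ρA a a' = ∑ b, ρ (a, b) (a', b)) (hρAh : ρA.IsHermitian)
    (ρB : Matrix (Fin n) (Fin n) ℂ)
    (hρB : ∀ b b', ρB b b' = ∑ a, ρ (a, b) (a, b')) (hρBh : ρB.IsHermitian)
    (sAB : Fin (m * n) → ℝ) (hsAB_anti : Antitone sAB)
    (hsAB : ∃ e : Fin (m * n) ≃ Fin m × Fin n, ∀ i, sAB i = hρ.1.eigenvalues (e i))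
    (sA : Fin m → ℝ) (hsA_anti : Antitone sA)
    (hsA : ∃ σ : Equiv.Perm (Fin m), ∀ i, sA i = hρAh.eigenvalues (σ i))
    (sB : Fin n → ℝ) (hsB_anti : Antitone sB)
    (hsB : ∃ σ : Equiv.Perm (Fin n), ∀ i, sB i = hρBh.eigenvalues (σ i)) :
    ∃ (kseq : ℕ → ℕ) (lam mu nu : ℕ → ℕ → ℕ),
      (∀ j, 0 < kseq j) ∧
      (∀ j, IsPartitionOf (kseq j) (lam j) ∧ ∀ i, m * n ≤ i → lam j i = 0) ∧
      (∀ j, IsPartitionOf (kseq j) (mu j) ∧ ∀ i, m ≤ i → mu j i = 0) ∧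
      (∀ j, IsPartitionOf (kseq j) (nu j) ∧ ∀ i, n ≤ i → nu j i = 0) ∧
      (∀ j, g (kseq j) (lam j) (mu j) (nu j) ≠ 0) ∧
      (∀ i : Fin (m * n),
        Tendsto (fun j => (lam j i : ℝ) / (kseq j : ℝ)) atTop (nhds (sAB i))) ∧
      (∀ i : Fin m,
        Tendsto (fun j => (mu j i : ℝ) / (kseq j : ℝ)) atTop (nhds (sA i))) ∧
      (∀ i : Fin n,
        Tendsto (fun j => (nu j i : ℝ) / (kseq j : ℝ)) atTop (nhds (sB i))) := by
  classical
  obtain ⟨e, he⟩ := hsAB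
  obtain ⟨σ, hσ⟩ := hsA
  obtain ⟨τ, hτ⟩ := hsB
  have hA := Kron.ptrace_psd hρ hρtr hρA
  have hB := Kron.ptrace_psd' hρ hρtr hρB
  have hex : ∀ j : ℕ, ∃ k : ℕ, 0 < k ∧ ∃ p q r : Nat.Partition k,
      Kron.Good (m * n) (Kron.extR sAB) (1 / ((j : ℝ) + 1)) p ∧
      Kron.Good m (Kron.extR sA) (1 / ((j : ℝ) + 1)) q ∧
      Kron.Good n (Kron.extR sB) (1 / ((j : ℝ) + 1)) r ∧ Kron.yy p q r ≠ 0 := by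
    intro j
    have hε : (0 : ℝ) < 1 / ((j : ℝ) + 1) := by positivity
    have hε1 : 1 / ((j : ℝ) + 1) ≤ 1 := by
      rw [div_le_one (by positivity)]
      linarith [Nat.cast_nonneg (α := ℝ) j]
    have e1 := Kron.ev_bad ρ hρ hρ.1 hρtr e sAB he hsAB_anti hε hε1
    have e2 := Kron.ev_bad ρA hA.1 hρAh hA.2 σ sA hσ hsA_anti hε hε1
    have e3 := Kron.ev_bad ρB hB.1 hρBh hB.2 τ sB hτ hsB_anti hε hε1
    obtain ⟨k, ⟨⟨h1, h2⟩, h3⟩, hk⟩ := (((e1.and e2).and e3).and (eventually_gt_atTop 0)).exists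
    refine ⟨k, hk, ?_⟩
    refine Kron.exists_triple hρ hρtr hρA hρB _ _ _ ?_ ?_ ?_
    · convert h1
    · convert h2
    · convert h3
  choose kseq hk p q r h1 h2 h3 hy using hex
  exact ⟨kseq, fun j => Kron.lamOf (p j), fun j => Kron.lamOf (q j), fun j => Kron.lamOf (r j), hk,
    fun j => ⟨Kron.lamOf_part _, (h1 j).1⟩, fun j => ⟨Kron.lamOf_part _, (h2 j).1⟩,
    fun j => ⟨Kron.lamOf_part _, (h3 j).1⟩, fun j => Kron.kron_ne hchi hg (hy j),
    Kron.good_tendsto h1, Kron.good_tendsto h2, Kron.good_tendsto h3⟩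

end
end

section
/- Let λ_j, μ_j, ν_j be sequences of partitions of k_j → ∞ with at most d parts such that λ_j/k_j → p, μ_j/k_j → q, ν_j/k_j → s (probability vectors), and g_{λ_j μ_j ν_j} ≠ 0 for all j. Then H(p) ≤ H(q) + H(s), where H is the Shannon entropy. -/
open Finset Nat

noncomputable section

/-- size of the fibre of `f` through `i`. -/
def fibN {k : ℕ} {L : Type*} [DecidableEq L] (f : Fin k → L) (i : Fin k) : ℕ :=
  (univ.filter fun j => f j = f i).card

/-- unnormalised (negative) entropy of a word. -/
def wordE {k : ℕ} {L : Type*} [DecidableEq L] (f : Fin k → L) : ℝ :=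
  ∑ i, Real.log (fibN f i)

lemma fibN_pos {k : ℕ} {L : Type*} [DecidableEq L] (f : Fin k → L) (i : Fin k) :
    0 < fibN f i := Finset.card_pos.2 ⟨i, by simp⟩

lemma sum_antitone_le (c : ℕ → ℝ) (hc : Antitone c) (T : Finset ℕ) :
    ∑ x ∈ T, c x ≤ ∑ x ∈ range T.card, c x := by
  rw [← Finset.sum_coe_sort T, Finset.sum_range, ← (T.orderIsoOfFin rfl).toEquiv.sum_comp]
  refine Finset.sum_le_sum fun i _ => hc ?_
  have key : ∀ n (h : n < T.card), n ≤ ((T.orderIsoOfFin rfl ⟨n, h⟩ : T) : ℕ) := by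
    intro n
    induction n with
    | zero => intro h; exact Nat.zero_le _
    | succ n ih =>
      intro h
      have h1 := ih (by omega)
      have h2 : T.orderIsoOfFin rfl ⟨n, by omega⟩ < T.orderIsoOfFin rfl ⟨n + 1, h⟩ :=
        (T.orderIsoOfFin rfl).strictMono (by simp [Fin.lt_def])
      have h3 : ((T.orderIsoOfFin rfl ⟨n, by omega⟩ : T) : ℕ) <
        (T.orderIsoOfFin rfl ⟨n + 1, h⟩ : T) := h2
      omega
  exact key i.1 i.2

lemma gibbs {k : ℕ} {L : Type*} [DecidableEq L] (f : Fin k → L) (b : L → ℝ)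
    (hb : ∀ i, 0 < b (f i)) (hs : ∑ l ∈ univ.image f, b l ≤ k) :
    ∑ i, Real.log (b (f i)) ≤ wordE f := by
  have h1 : ∀ i, Real.log (b (f i)) - Real.log (fibN f i) ≤ b (f i) / fibN f i - 1 := by
    intro i
    have hN : (0:ℝ) < fibN f i := by exact_mod_cast fibN_pos f i
    rw [← Real.log_div (hb i).ne' hN.ne']
    exact Real.log_le_sub_one_of_pos (div_pos (hb i) hN)
  have h2 : ∑ i, b (f i) / fibN f i = ∑ l ∈ univ.image f, b l := by
    rw [← Finset.sum_fiberwise_of_maps_to (s := univ) (t := univ.image f) (g := f)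
      (fun i _ => mem_image_of_mem f (mem_univ i))]
    refine Finset.sum_congr rfl fun l hl => ?_
    obtain ⟨i, -, rfl⟩ := mem_image.1 hl
    have hN : (fibN f i : ℝ) ≠ 0 := by exact_mod_cast (fibN_pos f i).ne'
    rw [Finset.sum_congr rfl (g := fun _ => b (f i) / fibN f i)]
    · rw [Finset.sum_const, nsmul_eq_mul]
      change (fibN f i : ℝ) * _ = _
      field_simp
    · intro j hj
      have : f j = f i := (mem_filter.1 hj).2
      simp [fibN, this]
  have h3 := Finset.sum_le_sum fun i (_ : i ∈ (univ : Finset (Fin k))) => h1 i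
  simp only [Finset.sum_sub_distrib, h2] at h3
  simp at h3
  unfold wordE
  linarith

lemma exists_rank {k : ℕ} {L : Type*} [DecidableEq L] (w : Fin k → L) :
    ∃ ρ : Fin k → ℕ, (∀ i j, ρ i = ρ j ↔ w i = w j) ∧
      Antitone fun r : ℕ => (univ.filter fun j => ρ j = r).card := by
  set S := univ.image w with hS
  let e := S.equivFin
  let x : Fin k → S := fun i => ⟨w i, mem_image_of_mem w (mem_univ i)⟩
  let n : Fin S.card → ℕᵒᵈ := fun r =>
    OrderDual.toDual (univ.filter fun j => e (x j) = r).card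
  let σ := Tuple.sort n
  have hm : Monotone (n ∘ σ) := Tuple.monotone_sort n
  refine ⟨fun i => (σ.symm (e (x i)) : ℕ), ?_, ?_⟩
  · intro i j
    simp [x, Fin.val_inj]
  · intro a b hab
    change (univ.filter fun j => (σ.symm (e (x j)) : ℕ) = b).card ≤
      (univ.filter fun j => (σ.symm (e (x j)) : ℕ) = a).card
    by_cases hb : b < S.card
    · have h := hm (show (⟨a, by omega⟩ : Fin S.card) ≤ ⟨b, hb⟩ from hab)
      have h' : (univ.filter fun j => e (x j) = σ ⟨b, hb⟩).card ≤
        (univ.filter fun j => e (x j) = σ ⟨a, by omega⟩).card := h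
      convert h' using 3
      · rw [← Equiv.symm_apply_eq, Fin.ext_iff]
      · rw [← Equiv.symm_apply_eq, Fin.ext_iff]
    · rw [Finset.card_eq_zero.2]
      · exact Nat.zero_le _
      · ext j
        simp
        have := (σ.symm (e (x j))).2
        omega

lemma fibN_congr {k : ℕ} {L M : Type*} [DecidableEq L] [DecidableEq M] (f : Fin k → L)
    (g : Fin k → M) (h : ∀ i j, f i = f j ↔ g i = g j) : wordE f = wordE g := by
  unfold wordE fibN
  simp only [h]

lemma wordE_perm {k : ℕ} {L : Type*} [DecidableEq L] (f : Fin k → L) (σ : Equiv.Perm (Fin k)) :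
    wordE (fun i => f (σ i)) = wordE f := by
  unfold wordE
  rw [← Equiv.sum_comp σ (fun i => Real.log (fibN f i))]
  refine Finset.sum_congr rfl fun i _ => ?_
  congr 2
  unfold fibN
  exact Finset.card_equiv σ (by simp)

lemma lower_eq_range (T : Finset ℕ) (h : ∀ a ∈ T, ∀ b ≤ a, b ∈ T) : T = range T.card := by
  have hr : ∀ a ∈ T, range (a + 1) ⊆ T := fun a ha b hb =>
    h a ha b (by simpa [Nat.lt_succ_iff] using hb)
  refine Finset.eq_of_subset_of_card_le (fun a ha => ?_) (by simp)
  have := Finset.card_le_card (hr a ha)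
  simp at this ⊢
  omega

lemma dominance {k : ℕ} {L : Type*} [DecidableEq L] (row col : Fin k → ℕ) (w : Fin k → L)
    (hinj : ∀ i j, row i = row j → col i = col j → i = j)
    (hlow : ∀ i, ∀ r ≤ row i, ∃ j, row j = r ∧ col j = col i)
    (hw : ∀ i j, col i = col j → w i = w j → i = j) :
    wordE w ≤ wordE row := by
  obtain ⟨ρ, hρ, ha⟩ := exists_rank w
  rw [← fibN_congr ρ w hρ]
  set a : ℕ → ℕ := fun r => (univ.filter fun j => ρ j = r).card with hadef
  have hrow : ∀ v, (univ.filter fun i => col i = v).image row =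
      range (univ.filter fun i => col i = v).card := by
    intro v
    have hc : ((univ.filter fun i => col i = v).image row).card =
        (univ.filter fun i => col i = v).card := by
      apply Finset.card_image_of_injOn
      intro i hi j hj h
      simp at hi hj
      exact hinj i j h (hi.trans hj.symm)
    rw [← hc]
    apply lower_eq_range
    intro r hr b hb
    obtain ⟨i, hi, rfl⟩ := mem_image.1 hr
    obtain ⟨j, hj, hj'⟩ := hlow i b hb
    exact mem_image.2 ⟨j, by simp at hi ⊢; omega, hj⟩
  have hρinj : ∀ v, Set.InjOn ρ (univ.filter fun i => col i = v : Finset (Fin k)) := by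
    intro v i hi j hj h
    simp at hi hj
    exact hw i j (hi.trans hj.symm) ((hρ i j).1 h)
  have hcanti : Antitone fun r => Real.log (a r) := by
    intro r s hrs
    change Real.log (a s) ≤ Real.log (a r)
    rcases Nat.eq_zero_or_pos (a s) with h0 | h0
    · rw [h0]; simpa using Real.log_natCast_nonneg _
    · exact Real.log_le_log (by exact_mod_cast h0) (by exact_mod_cast ha hrs)
  have h1 : wordE ρ ≤ ∑ i, Real.log (a (row i)) := by
    change ∑ i, Real.log (a (ρ i)) ≤ _
    rw [← Finset.sum_fiberwise_of_maps_to (s := univ) (t := univ.image col) (g := col)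
      (fun i _ => mem_image_of_mem col (mem_univ i)),
      ← Finset.sum_fiberwise_of_maps_to (s := univ) (t := univ.image col) (g := col)
      (fun i _ => mem_image_of_mem col (mem_univ i)) (fun i => Real.log (a (row i)))]
    refine Finset.sum_le_sum fun v _ => ?_
    rw [← Finset.sum_image (f := fun r => Real.log (a r)) (hρinj v)]
    rw [← Finset.sum_image (g := row) (f := fun r => Real.log (a r))]
    · rw [hrow v, ← Finset.card_image_of_injOn (hρinj v)]
      exact sum_antitone_le _ hcanti _
    · intro i hi j hj h
      simp at hi hj
      exact hinj i j h (hi.trans hj.symm)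
  refine h1.trans (gibbs row (fun r => (a r : ℝ)) ?_ ?_)
  · intro i
    by_contra hcon
    have h0 : a (row i) = 0 := by
      have : ¬ (0 < a (row i)) := fun h => hcon (by exact_mod_cast h)
      omega
    have hsub : (univ.filter fun j => col j = col i).image ρ ⊆ range (row i) := by
      intro r hr
      obtain ⟨j, -, rfl⟩ := mem_image.1 hr
      rw [mem_range]
      by_contra hlt
      have h2 : a (ρ j) ≤ a (row i) := ha (not_lt.1 hlt)
      have h3 : 0 < a (ρ j) := fibN_pos ρ j
      omega
    have h4 := Finset.card_le_card hsub
    rw [Finset.card_image_of_injOn (hρinj _), card_range] at h4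
    have h5 : row i ∈ (univ.filter fun j => col j = col i).image row :=
      mem_image.2 ⟨i, by simp, rfl⟩
    rw [hrow, mem_range] at h5
    omega
  · have : ∑ r ∈ univ.image row, a r ≤ k := by
      rw [← Finset.card_biUnion]
      · simpa using Finset.card_le_univ (α := Fin k) _
      · intro r _ s _ hrs
        rw [Function.onFun, Finset.disjoint_filter]
        intro j _ h1 h2
        exact hrs (h1.symm.trans h2)
    exact_mod_cast this

lemma subadd {k : ℕ} {L M : Type*} [DecidableEq L] [DecidableEq M] (f : Fin k → L)
    (g : Fin k → M) :
    wordE f + wordE g ≤ wordE (fun i => (f i, g i)) + k * Real.log k := by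
  rcases Nat.eq_zero_or_pos k with rfl | hk
  · simp [wordE]
  have hk' : (0:ℝ) < k := by exact_mod_cast hk
  let cf : L → ℝ := fun l => ((univ.filter fun j => f j = l).card : ℝ)
  let cg : M → ℝ := fun l => ((univ.filter fun j => g j = l).card : ℝ)
  have hcf : ∀ i, 0 < cf (f i) := fun i => Nat.cast_pos.2 (fibN_pos f i)
  have hcg : ∀ i, 0 < cg (g i) := fun i => Nat.cast_pos.2 (fibN_pos g i)
  have hf : ∑ l ∈ univ.image f, cf l = k := by
    have := Finset.card_eq_sum_card_image f (univ : Finset (Fin k))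
    rw [Finset.card_univ, Fintype.card_fin] at this
    simp only [cf]
    exact_mod_cast this.symm
  have hg : ∑ l ∈ univ.image g, cg l = k := by
    have := Finset.card_eq_sum_card_image g (univ : Finset (Fin k))
    rw [Finset.card_univ, Fintype.card_fin] at this
    simp only [cg]
    exact_mod_cast this.symm
  have h := gibbs (fun i => (f i, g i)) (fun x => cf x.1 * cg x.2 / k)
    (fun i => div_pos (mul_pos (hcf i) (hcg i)) hk') (by
      calc _ ≤ ∑ x ∈ (univ.image f) ×ˢ (univ.image g), cf x.1 * cg x.2 / k := by
            apply Finset.sum_le_sum_of_subset_of_nonneg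
            · intro x hx
              obtain ⟨i, -, rfl⟩ := mem_image.1 hx
              simp
            · intro x _ _
              positivity
        _ = k := by
            rw [← Finset.sum_div, Finset.sum_product]
            simp only [← Finset.mul_sum, hg, ← Finset.sum_mul, hf]
            field_simp
        _ ≤ k := le_rfl)
  have h2 : ∀ i, Real.log (cf (f i) * cg (g i) / k) =
      Real.log (fibN f i) + Real.log (fibN g i) - Real.log k := by
    intro i
    rw [Real.log_div (mul_pos (hcf i) (hcg i)).ne' hk'.ne',
      Real.log_mul (hcf i).ne' (hcg i).ne']
    rfl
  simp only [h2, Finset.sum_sub_distrib, Finset.sum_add_distrib] at h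
  simp at h
  unfold wordE at h ⊢
  linarith

section rep

open TensorProduct

/-- the representation on the Young ideal. -/
def yRep (k : ℕ) (t : Fin k → ℕ × ℕ) :
    Representation ℂ (Equiv.Perm (Fin k)) (youngIdeal k t) where
  toFun π := ((LinearMap.mulLeft ℂ (MonoidAlgebra.single π (1 : ℂ))).restrict
      (fun x hx => by
        obtain ⟨a, rfl⟩ := hx
        exact ⟨MonoidAlgebra.single π (1 : ℂ) * a, by
          simp only [LinearMap.mulRight_apply, LinearMap.mulLeft_apply, mul_assoc]⟩))
  map_one' := by
    ext x
    simp [← MonoidAlgebra.one_def]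
  map_mul' g h := by
    ext1 x
    apply Subtype.ext
    simp [← mul_assoc]

lemma yRep_coe (k : ℕ) (t : Fin k → ℕ × ℕ) (g : Equiv.Perm (Fin k)) (x : youngIdeal k t) :
    ((yRep k t g x : youngIdeal k t) : MonoidAlgebra ℂ (Equiv.Perm (Fin k))) =
      MonoidAlgebra.single g (1 : ℂ) * (x : MonoidAlgebra ℂ (Equiv.Perm (Fin k))) := rfl

lemma yRep_trace (k : ℕ) (t : Fin k → ℕ × ℕ) (g : Equiv.Perm (Fin k)) :
    LinearMap.trace ℂ _ (yRep k t g) = youngIdealChar k t g := rfl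

/-- coefficient functional on the Young ideal. -/
def yEv (k : ℕ) (t : Fin k → ℕ × ℕ) (c : Equiv.Perm (Fin k)) : youngIdeal k t →ₗ[ℂ] ℂ where
  toFun x := (x : MonoidAlgebra ℂ (Equiv.Perm (Fin k))).coeff c
  map_add' x y := by simp
  map_smul' a x := by simp

lemma yEv_rep (k : ℕ) (t : Fin k → ℕ × ℕ) (g c : Equiv.Perm (Fin k)) (x : youngIdeal k t) :
    yEv k t c (yRep k t g x) = yEv k t (g⁻¹ * c) x := by
  change ((yRep k t g x : youngIdeal k t) : MonoidAlgebra ℂ (Equiv.Perm (Fin k))).coeff c =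
    (x : MonoidAlgebra ℂ (Equiv.Perm (Fin k))).coeff (g⁻¹ * c)
  simp [yRep_coe]

lemma row_mul (k : ℕ) (t : Fin k → ℕ × ℕ) (h : Equiv.Perm (Fin k))
    (hh : ∀ j, (t (h j)).1 = (t j).1) :
    (∑ π ∈ univ.filter (fun π : Equiv.Perm (Fin k) => ∀ j, (t (π j)).1 = (t j).1),
      MonoidAlgebra.single π (1 : ℂ)) * MonoidAlgebra.single h (1 : ℂ) =
    ∑ π ∈ univ.filter (fun π : Equiv.Perm (Fin k) => ∀ j, (t (π j)).1 = (t j).1),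
      MonoidAlgebra.single π (1 : ℂ) := by
  rw [Finset.sum_mul]
  simp only [MonoidAlgebra.single_mul_single, mul_one]
  refine Finset.sum_equiv (Equiv.mulRight h) ?_ ?_
  · intro π
    simp only [mem_filter, mem_univ, true_and, Equiv.coe_mulRight, Equiv.Perm.mul_apply]
    constructor
    · intro H j; rw [H, hh]
    · intro H j
      have := H (h⁻¹ j)
      rw [← hh (h⁻¹ j)] at this
      simpa using this
  · intro π _; rfl

lemma yEv_right (k : ℕ) (t : Fin k → ℕ × ℕ) (h : Equiv.Perm (Fin k))
    (hh : ∀ j, (t (h j)).1 = (t j).1) (c : Equiv.Perm (Fin k)) :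
    yEv k t (c * h) = yEv k t c := by
  ext ⟨x, a, rfl⟩
  have : LinearMap.mulRight ℂ (youngSym k t) a * MonoidAlgebra.single h (1 : ℂ) =
      LinearMap.mulRight ℂ (youngSym k t) a := by
    rw [LinearMap.mulRight_apply, youngSym, mul_assoc, mul_assoc, row_mul k t h hh]
  change (LinearMap.mulRight ℂ (youngSym k t) a).coeff (c * h) = _
  conv_lhs => rw [← this]
  rw [MonoidAlgebra.coeff_mul_single_mul, mul_one]
  rfl

lemma col_mul (k : ℕ) (t : Fin k → ℕ × ℕ) (h : Equiv.Perm (Fin k))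
    (hh : ∀ j, (t (h j)).2 = (t j).2) (hs : Equiv.Perm.sign h = -1) :
    MonoidAlgebra.single h (1 : ℂ) *
    (∑ π ∈ univ.filter (fun π : Equiv.Perm (Fin k) => ∀ j, (t (π j)).2 = (t j).2),
      MonoidAlgebra.single π ((Equiv.Perm.sign π : ℤ) : ℂ)) =
    - ∑ π ∈ univ.filter (fun π : Equiv.Perm (Fin k) => ∀ j, (t (π j)).2 = (t j).2),
      MonoidAlgebra.single π ((Equiv.Perm.sign π : ℤ) : ℂ) := by
  rw [Finset.mul_sum, ← Finset.sum_neg_distrib]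
  simp only [MonoidAlgebra.single_mul_single, one_mul]
  refine Finset.sum_equiv (Equiv.mulLeft h) ?_ ?_
  · intro π
    simp only [mem_filter, mem_univ, true_and, Equiv.coe_mulLeft, Equiv.Perm.mul_apply]
    constructor
    · intro H j; rw [hh, H]
    · intro H j; rw [← H j, hh]
  · intro π _
    rw [Equiv.coe_mulLeft, ← MonoidAlgebra.single_neg, Equiv.Perm.sign_mul, hs]
    simp

/-- contraction. -/
def ctr (U : Type*) {V : Type*} [AddCommMonoid U] [Module ℂ U] [AddCommGroup V] [Module ℂ V]
    (phi : V →ₗ[ℂ] ℂ) : U ⊗[ℂ] V →ₗ[ℂ] U :=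
  (TensorProduct.rid ℂ U).toLinearMap ∘ₗ LinearMap.lTensor U phi

lemma ctr_tmul {U V : Type*} [AddCommMonoid U] [Module ℂ U] [AddCommGroup V] [Module ℂ V]
    (phi : V →ₗ[ℂ] ℂ) (u : U) (v : V) : ctr U phi (u ⊗ₜ v) = phi v • u := by
  simp [ctr]

lemma ctr_sep {U V ι : Type*} [AddCommMonoid U] [Module ℂ U] [Module.Flat ℂ U] [AddCommGroup V] [Module ℂ V]
    [Fintype ι] [DecidableEq ι] (phi : ι → V →ₗ[ℂ] ℂ) (hphi : ∀ v, (∀ i, phi i v = 0) → v = 0)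
    (x : U ⊗[ℂ] V) (hx : x ≠ 0) : ∃ i, ctr U (phi i) x ≠ 0 := by
  by_contra! hcon
  apply hx
  have hinj : Function.Injective (LinearMap.pi phi) := by
    rw [injective_iff_map_eq_zero]
    intro v hv
    exact hphi v fun i => congrFun hv i
  have h1 := Module.Flat.lTensor_preserves_injective_linearMap (M := U) (LinearMap.pi phi) hinj
  apply h1
  apply (TensorProduct.piScalarRight ℂ ℂ U ι).injective
  rw [map_zero, map_zero]
  ext i
  have : LinearMap.proj i ∘ₗ (TensorProduct.piScalarRight ℂ ℂ U ι).toLinearMap ∘ₗ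
      LinearMap.lTensor U (LinearMap.pi phi) = ctr U (phi i) := by
    apply TensorProduct.ext'
    intro u v
    simp [ctr_tmul]
  have h2 := congrArg (fun f => f x) this
  simp only [hcon] at h2
  exact h2

lemma yEv_sep (k : ℕ) (t : Fin k → ℕ × ℕ) (v : youngIdeal k t)
    (h : ∀ c, yEv k t c v = 0) : v = 0 := by
  apply Subtype.ext
  ext c
  exact h c

lemma ctr_rep {k : ℕ} {U : Type*} [AddCommMonoid U] [Module ℂ U]
    (ρ : Representation ℂ (Equiv.Perm (Fin k)) U) (t : Fin k → ℕ × ℕ)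
    (g c : Equiv.Perm (Fin k)) (x : U ⊗[ℂ] youngIdeal k t) :
    ctr U (yEv k t c) (ρ.tprod (yRep k t) g x) = ρ g (ctr U (yEv k t (g⁻¹ * c)) x) := by
  induction x using TensorProduct.induction_on with
  | zero => simp
  | tmul u v =>
    simp [Representation.tprod_apply, ctr_tmul, yEv_rep]
  | add x y hx hy => simp only [map_add, hx, hy]

lemma trace_three {U V W : Type*} [AddCommGroup U] [Module ℂ U] [AddCommGroup V] [Module ℂ V]
    [AddCommGroup W] [Module ℂ W] [FiniteDimensional ℂ U] [FiniteDimensional ℂ V]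
    [FiniteDimensional ℂ W] (f : U →ₗ[ℂ] U) (g : V →ₗ[ℂ] V) (h : W →ₗ[ℂ] W) :
    LinearMap.trace ℂ _ (TensorProduct.map (TensorProduct.map f g) h) =
      LinearMap.trace ℂ _ f * LinearMap.trace ℂ _ g * LinearMap.trace ℂ _ h := by
  have h1 := LinearMap.trace_tensorProduct' (R := ℂ) (M := U ⊗[ℂ] V) (N := W)
    (TensorProduct.map f g) h
  have h2 := LinearMap.trace_tensorProduct' (R := ℂ) (M := U) (N := V) f g
  rw [h2] at h1
  exact h1

lemma exists_invariant {k : ℕ} (t₁ t₂ t₃ : Fin k → ℕ × ℕ)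
    (h : ∑ π, youngIdealChar k t₁ π * youngIdealChar k t₂ π * youngIdealChar k t₃ π ≠ 0) :
    ∃ (z : youngIdeal k t₁) (b c : Equiv.Perm (Fin k)), z ≠ 0 ∧
      ∀ g : Equiv.Perm (Fin k),
        (∀ j, (t₂ (b⁻¹ (g j))).1 = (t₂ (b⁻¹ j)).1) →
        (∀ j, (t₃ (c⁻¹ (g j))).1 = (t₃ (c⁻¹ j)).1) → yRep k t₁ g z = z := by
  set ρ₂ := (yRep k t₁).tprod (yRep k t₂) with hρ₂
  set ρ := ρ₂.tprod (yRep k t₃) with hρ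
  have hP : (∑ g, ρ g) ≠ 0 := by
    intro h0
    apply h
    have h1 := congrArg (LinearMap.trace ℂ _) h0
    rw [map_sum, map_zero] at h1
    rw [← h1]
    refine Finset.sum_congr rfl fun g _ => ?_
    exact (trace_three (yRep k t₁ g) (yRep k t₂ g) (yRep k t₃ g)).symm
  obtain ⟨x₀, hx₀⟩ : ∃ x₀, (∑ g, ρ g) x₀ ≠ 0 := by
    by_contra! hcon
    exact hP (LinearMap.ext hcon)
  set x := (∑ g, ρ g) x₀ with hx
  have hinv : ∀ g, ρ g x = x := by
    intro g
    rw [hx, ← Module.End.mul_apply, Finset.mul_sum]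
    simp only [← map_mul]
    rw [← Equiv.sum_comp (Equiv.mulLeft g) (fun g => ρ g)]
    rfl
  obtain ⟨c, hc⟩ := ctr_sep (yEv k t₃) (yEv_sep k t₃) x hx₀
  obtain ⟨b, hb⟩ := ctr_sep (yEv k t₂) (yEv_sep k t₂) _ hc
  refine ⟨_, b, c, hb, fun g h2 h3 => ?_⟩
  have e2 : yEv k t₂ (g⁻¹ * (g * b)) = yEv k t₂ b := by simp
  have f2 : yEv k t₂ (g * b) = yEv k t₂ b := by
    have := yEv_right k t₂ (b⁻¹ * g * b) (fun j => by simpa using h2 (b j)) b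
    rw [← this]; congr 1; group
  have f3 : yEv k t₃ (g * c) = yEv k t₃ c := by
    have := yEv_right k t₃ (c⁻¹ * g * c) (fun j => by simpa using h3 (c j)) c
    rw [← this]; congr 1; group
  have s1 := ctr_rep (yRep k t₁) t₂ g (g * b) (ctr _ (yEv k t₃ c) x)
  have s2 := ctr_rep ρ₂ t₃ g (g * c) x
  rw [← hρ, hinv, f3, inv_mul_cancel_left] at s2
  rw [inv_mul_cancel_left, f2, ← hρ₂, ← s2] at s1
  exact s1.symm

lemma exists_good {k : ℕ} {L : Type*} [DecidableEq L] (t : Fin k → ℕ × ℕ)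
    (z : youngIdeal k t) (hz : z ≠ 0) (w : Fin k → L)
    (hw : ∀ g : Equiv.Perm (Fin k), (∀ j, w (g j) = w j) → yRep k t g z = z) :
    ∃ σ : Equiv.Perm (Fin k), ∀ i j, (t i).2 = (t j).2 → w (σ i) = w (σ j) → i = j := by
  by_contra! hcon
  apply hz
  set S := univ.filter (fun g : Equiv.Perm (Fin k) => ∀ j, w (g j) = w j) with hS
  set Q : MonoidAlgebra ℂ (Equiv.Perm (Fin k)) := ∑ g ∈ S, MonoidAlgebra.single g 1 with hQ
  have hQmul : ∀ h : Equiv.Perm (Fin k), (∀ j, w (h j) = w j) →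
      Q * MonoidAlgebra.single h 1 = Q := by
    intro h hh
    rw [hQ, Finset.sum_mul]
    simp only [MonoidAlgebra.single_mul_single, mul_one]
    refine Finset.sum_equiv (Equiv.mulRight h) ?_ ?_
    · intro π
      simp only [hS, mem_filter, mem_univ, true_and, Equiv.coe_mulRight, Equiv.Perm.mul_apply]
      constructor
      · intro H j; rw [H, hh]
      · intro H j
        have := H (h⁻¹ j)
        rw [← hh (h⁻¹ j)] at this
        simpa using this
    · intro π _; rfl
  set C : MonoidAlgebra ℂ (Equiv.Perm (Fin k)) :=
    ∑ π ∈ univ.filter (fun π : Equiv.Perm (Fin k) => ∀ j, (t (π j)).2 = (t j).2),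
      MonoidAlgebra.single π ((Equiv.Perm.sign π : ℤ) : ℂ) with hC
  have hQC : ∀ σ : Equiv.Perm (Fin k), Q * MonoidAlgebra.single σ 1 * C = 0 := by
    intro σ
    obtain ⟨i, j, hcol, hwij, hij⟩ := hcon σ
    have hτ : MonoidAlgebra.single (Equiv.swap i j) (1:ℂ) * C = -C := by
      apply col_mul
      · intro l
        by_cases h1 : l = i
        · subst h1; rw [Equiv.swap_apply_left, hcol]
        by_cases h2 : l = j
        · subst h2; rw [Equiv.swap_apply_right, hcol]
        rw [Equiv.swap_apply_of_ne_of_ne h1 h2]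
      · exact Equiv.Perm.sign_swap hij
    have hg := hQmul (Equiv.swap (σ i) (σ j)) (by
      intro l
      by_cases h1 : l = σ i
      · subst h1; rw [Equiv.swap_apply_left, hwij]
      by_cases h2 : l = σ j
      · subst h2; rw [Equiv.swap_apply_right, hwij]
      rw [Equiv.swap_apply_of_ne_of_ne h1 h2])
    have hcomm : Equiv.swap (σ i) (σ j) * σ = σ * Equiv.swap i j := by
      rw [Equiv.mul_swap_eq_swap_mul]
    have key : Q * MonoidAlgebra.single σ 1 * C = -(Q * MonoidAlgebra.single σ 1 * C) := by
      calc Q * MonoidAlgebra.single σ 1 * C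
          = Q * MonoidAlgebra.single (Equiv.swap (σ i) (σ j)) 1 *
              MonoidAlgebra.single σ 1 * C := by rw [hg]
        _ = Q * MonoidAlgebra.single σ 1 * (MonoidAlgebra.single (Equiv.swap i j) 1 * C) := by
            rw [mul_assoc Q, MonoidAlgebra.single_mul_single, hcomm, ← mul_assoc _ _ C,
              mul_assoc Q _ (MonoidAlgebra.single (Equiv.swap i j) 1),
              MonoidAlgebra.single_mul_single]
        _ = _ := by rw [hτ, mul_neg]
    have h2 : (2 : ℂ) • (Q * MonoidAlgebra.single σ 1 * C) = 0 := by
      rw [two_smul]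
      nth_rewrite 2 [key]
      exact add_neg_cancel _
    exact (smul_eq_zero.1 h2).resolve_left two_ne_zero
  have hQaC : ∀ a : MonoidAlgebra ℂ (Equiv.Perm (Fin k)), Q * a * C = 0 := by
    intro a
    induction a using MonoidAlgebra.induction_linear with
    | zero => simp
    | add x y hx hy => rw [mul_add, add_mul, hx, hy, add_zero]
    | single g r =>
      have : MonoidAlgebra.single g r = r • MonoidAlgebra.single g (1:ℂ) := by simp
      rw [this, mul_smul_comm, smul_mul_assoc, hQC, smul_zero]
  have hQz : Q * (z : MonoidAlgebra ℂ (Equiv.Perm (Fin k))) = 0 := by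
    obtain ⟨z, a, rfl⟩ := z
    change Q * (a * youngSym k t) = 0
    rw [youngSym, ← hC, ← mul_assoc, ← mul_assoc, hQaC, zero_mul]
  have hQz' : Q * (z : MonoidAlgebra ℂ (Equiv.Perm (Fin k))) = (S.card : ℂ) • z.1 := by
    rw [hQ, Finset.sum_mul, Finset.sum_congr rfl (g := fun _ => z.1)]
    · rw [Finset.sum_const, Nat.cast_smul_eq_nsmul]
    · intro g hg
      have := hw g (mem_filter.1 hg).2
      exact congrArg Subtype.val this
  rw [hQz'] at hQz
  have hcard : (S.card : ℂ) ≠ 0 := by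
    have : 0 < S.card := Finset.card_pos.2 ⟨1, by simp [hS]⟩
    exact_mod_cast this.ne'
  exact Subtype.ext ((smul_eq_zero.1 hQz).resolve_left hcard)

end rep

lemma part_le {k : ℕ} {lam : ℕ → ℕ} (h : IsPartitionOf k lam) (i : ℕ) : lam i ≤ k := by
  by_cases hi : i < k
  · calc lam i ≤ ∑ i ∈ range k, lam i :=
        Finset.single_le_sum (f := lam) (fun _ _ => Nat.zero_le _) (mem_range.2 hi)
      _ = k := h.2.2
  · rw [h.2.1 i (not_lt.1 hi)]; exact Nat.zero_le _

lemma mem_cells {k : ℕ} {lam : ℕ → ℕ} (h : IsPartitionOf k lam) (c : ℕ × ℕ) :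
    c ∈ youngCells k lam ↔ c.2 < lam c.1 := by
  simp only [youngCells, mem_filter, mem_product, mem_range, and_iff_right_iff_imp]
  intro hc
  refine ⟨?_, hc.trans_le (part_le h _)⟩
  by_contra hcon
  rw [h.2.1 _ (not_lt.1 hcon)] at hc
  omega

lemma exists_tableau {k : ℕ} {lam : ℕ → ℕ} (h : IsPartitionOf k lam) :
    ∃ t : Fin k → ℕ × ℕ, Set.BijOn t Set.univ ↑(youngCells k lam) := by
  have hcard : (youngCells k lam).card = k := by
    have h1 := Finset.card_eq_sum_card_fiberwise (s := youngCells k lam) (t := range k)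
      (f := Prod.fst) (by
        intro c hc
        simp only [youngCells, coe_filter, mem_product, Set.mem_ofPred_eq] at hc
        exact hc.1.1)
    rw [h1]
    conv_rhs => rw [← h.2.2]
    refine Finset.sum_congr rfl fun r _ => ?_
    have : (youngCells k lam).filter (fun c => c.1 = r) = ({r} : Finset ℕ) ×ˢ range (lam r) := by
      ext ⟨a, b⟩
      simp only [mem_filter, mem_cells h, mem_product, mem_singleton, mem_range]
      constructor
      · rintro ⟨h1, rfl⟩; exact ⟨rfl, h1⟩
      · rintro ⟨rfl, h1⟩; exact ⟨h1, rfl⟩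
    rw [this]; simp
  let e := (youngCells k lam).equivFinOfCardEq hcard
  refine ⟨fun i => (e.symm i : ℕ × ℕ), fun i _ => (e.symm i).2, ?_, ?_⟩
  · intro i _ j _ hij
    exact e.symm.injective (Subtype.ext hij)
  · intro c hc
    exact ⟨e ⟨c, hc⟩, trivial, by simp⟩

lemma row_card {k : ℕ} {lam : ℕ → ℕ} (h : IsPartitionOf k lam) (t : Fin k → ℕ × ℕ)
    (ht : Set.BijOn t Set.univ ↑(youngCells k lam)) (r : ℕ) :
    (univ.filter fun j => (t j).1 = r).card = lam r := by
  have hinj : Function.Injective t := fun i j hij => ht.2.1 trivial trivial hij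
  rw [← Finset.card_image_of_injective _ hinj]
  have : (univ.filter fun j => (t j).1 = r).image t = ({r} : Finset ℕ) ×ˢ range (lam r) := by
    ext ⟨a, b⟩
    simp only [mem_image, mem_filter, mem_univ, true_and, mem_product, mem_singleton, mem_range]
    constructor
    · rintro ⟨j, rfl, hj⟩
      have h1 : t j ∈ youngCells k lam := ht.1 (Set.mem_univ j)
      rw [mem_cells h, hj] at h1
      exact ⟨by rw [hj], by rw [hj]; exact h1⟩
    · rintro ⟨rfl, hb⟩
      have h1 : (a, b) ∈ youngCells k lam := (mem_cells h _).2 hb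
      obtain ⟨j, -, hj⟩ := ht.2.2 h1
      exact ⟨j, by rw [hj], hj⟩
  rw [this]; simp

lemma wordE_row {k d : ℕ} {lam : ℕ → ℕ} (h : IsPartitionOf k lam) (hd : ∀ i, d ≤ i → lam i = 0)
    (t : Fin k → ℕ × ℕ) (ht : Set.BijOn t Set.univ ↑(youngCells k lam)) :
    wordE (fun i => (t i).1) = ∑ r : Fin d, (lam r : ℝ) * Real.log (lam r) := by
  rw [← Finset.sum_range (fun r => (lam r : ℝ) * Real.log (lam r))]
  have h0 : wordE (fun i => (t i).1) = ∑ i, Real.log (lam (t i).1) := by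
    unfold wordE fibN
    refine Finset.sum_congr rfl fun i _ => ?_
    rw [row_card h t ht]
  rw [h0, ← Finset.sum_fiberwise_of_maps_to (s := univ) (t := range d) (g := fun i => (t i).1)]
  · refine Finset.sum_congr rfl fun r _ => ?_
    rw [Finset.sum_congr rfl (g := fun _ => Real.log (lam r))]
    · rw [Finset.sum_const, row_card h t ht, nsmul_eq_mul]
    · intro j hj
      rw [(mem_filter.1 hj).2]
  · intro i _
    have h1 : t i ∈ youngCells k lam := ht.1 (Set.mem_univ i)
    rw [mem_cells h] at h1
    rw [mem_range]
    by_contra hcon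
    rw [hd _ (not_lt.1 hcon)] at h1
    omega

lemma finite_ineq {k d : ℕ} {lam mu nu : ℕ → ℕ}
    (hl : IsPartitionOf k lam) (hld : ∀ i, d ≤ i → lam i = 0)
    (hm : IsPartitionOf k mu) (hmd : ∀ i, d ≤ i → mu i = 0)
    (hn : IsPartitionOf k nu) (hnd : ∀ i, d ≤ i → nu i = 0)
    (chi : (k : ℕ) → (ℕ → ℕ) → Equiv.Perm (Fin k) → ℂ) (hchi : IsCharacterFamily chi)
    (g : (k : ℕ) → (ℕ → ℕ) → (ℕ → ℕ) → (ℕ → ℕ) → ℕ) (hg : IsKroneckerFamily chi g)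
    (h0 : g k lam mu nu ≠ 0) :
    (∑ r : Fin d, (mu r : ℝ) * Real.log (mu r)) + (∑ r : Fin d, (nu r : ℝ) * Real.log (nu r)) ≤
      (∑ r : Fin d, (lam r : ℝ) * Real.log (lam r)) + k * Real.log k := by
  obtain ⟨t₁, ht₁⟩ := exists_tableau hl
  obtain ⟨t₂, ht₂⟩ := exists_tableau hm
  obtain ⟨t₃, ht₃⟩ := exists_tableau hn
  have hsum : ∑ π, youngIdealChar k t₁ π * youngIdealChar k t₂ π * youngIdealChar k t₃ π ≠ 0 := by
    intro hz
    apply h0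
    have := hg k lam mu nu hl hm hn
    simp only [hchi k lam hl t₁ ht₁, hchi k mu hm t₂ ht₂, hchi k nu hn t₃ ht₃, hz, mul_zero] at this
    exact_mod_cast this
  obtain ⟨z, b, c, hz, hinv⟩ := exists_invariant t₁ t₂ t₃ hsum
  obtain ⟨σ, hσ⟩ := exists_good t₁ z hz (fun j => ((t₂ (b⁻¹ j)).1, (t₃ (c⁻¹ j)).1)) (by
    intro g' hg'
    exact hinv g' (fun j => (Prod.mk.inj (hg' j)).1) (fun j => (Prod.mk.inj (hg' j)).2))
  have hdom := dominance (fun i => (t₁ i).1) (fun i => (t₁ i).2)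
    (fun i => ((t₂ (b⁻¹ (σ i))).1, (t₃ (c⁻¹ (σ i))).1))
    (fun i j h1 h2 => ht₁.2.1 trivial trivial (Prod.ext h1 h2))
    (by
      intro i r hr
      have h1 : t₁ i ∈ youngCells k lam := ht₁.1 (Set.mem_univ i)
      rw [mem_cells hl] at h1
      have h2 : (r, (t₁ i).2) ∈ youngCells k lam :=
        (mem_cells hl _).2 (h1.trans_le (hl.1 hr))
      obtain ⟨j, -, hj⟩ := ht₁.2.2 h2
      exact ⟨j, by rw [hj], by rw [hj]⟩)
    hσ
  have hsub := subadd (fun i => (t₂ (b⁻¹ (σ i))).1) (fun i => (t₃ (c⁻¹ (σ i))).1)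
  have e2 := wordE_perm (fun i => (t₂ i).1) (b⁻¹ * σ)
  have e3 := wordE_perm (fun i => (t₃ i).1) (c⁻¹ * σ)
  simp only [Equiv.Perm.mul_apply] at e2 e3
  rw [e2, e3, wordE_row hm hmd t₂ ht₂, wordE_row hn hnd t₃ ht₃] at hsub
  rw [wordE_row hl hld t₁ ht₁] at hdom
  linarith

lemma entropy_norm {k d : ℕ} {lam : ℕ → ℕ} (hk : 0 < k)
    (h : IsPartitionOf k lam) (hd : ∀ i, d ≤ i → lam i = 0) :
    ∑ r : Fin d, ((lam r : ℝ) / k) * Real.log ((lam r : ℝ) / k) =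
      (∑ r : Fin d, (lam r : ℝ) * Real.log (lam r)) / k - Real.log k := by
  have hk' : (k : ℝ) ≠ 0 := by exact_mod_cast hk.ne'
  have hs : ∑ r : Fin d, (lam r : ℝ) = k := by
    rw [← Finset.sum_range (fun r => (lam r : ℝ))]
    have h1 : ∑ r ∈ range d, lam r = ∑ r ∈ range (max d k), lam r :=
      Finset.sum_subset (range_subset_range.2 (le_max_left _ _)) (fun x _ hx =>
        hd x (by simpa using hx))
    have h2 : ∑ r ∈ range k, lam r = ∑ r ∈ range (max d k), lam r :=
      Finset.sum_subset (range_subset_range.2 (le_max_right _ _)) (fun x _ hx =>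
        h.2.1 x (by simpa using hx))
    have h3 : ∑ r ∈ range d, lam r = k := by rw [h1, ← h2, h.2.2]
    exact_mod_cast h3
  have hterm : ∀ r : Fin d, ((lam r : ℝ) / k) * Real.log ((lam r : ℝ) / k) =
      ((lam r : ℝ) * Real.log (lam r)) / k - (lam r : ℝ) * (Real.log k / k) := by
    intro r
    by_cases h0 : (lam r : ℝ) = 0
    · simp [h0]
    · rw [Real.log_div h0 hk']; ring
  simp only [hterm, Finset.sum_sub_distrib, ← Finset.sum_div, ← Finset.sum_mul, hs]
  field_simp

open Filter

/-- If `lam_j, mu_j, nu_j` are partitions of `k_j → ∞` with at most `d` parts whose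
normalisations converge to probability vectors `p, q, s` and whose Kronecker coefficients
`g_{lam_j mu_j nu_j}` are all non-zero, then `H(p) ≤ H(q) + H(s)` for the Shannon entropy `H`. -/
theorem stmt_14 {d : ℕ}
    (chi : (k : ℕ) → (ℕ → ℕ) → Equiv.Perm (Fin k) → ℂ) (hchi : IsCharacterFamily chi)
    (g : (k : ℕ) → (ℕ → ℕ) → (ℕ → ℕ) → (ℕ → ℕ) → ℕ) (hg : IsKroneckerFamily chi g)
    (kseq : ℕ → ℕ) (hkseq : Tendsto kseq atTop atTop)
    (lam mu nu : ℕ → ℕ → ℕ)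
    (hlam : ∀ j, IsPartitionOf (kseq j) (lam j) ∧ ∀ i, d ≤ i → lam j i = 0)
    (hmu : ∀ j, IsPartitionOf (kseq j) (mu j) ∧ ∀ i, d ≤ i → mu j i = 0)
    (hnu : ∀ j, IsPartitionOf (kseq j) (nu j) ∧ ∀ i, d ≤ i → nu j i = 0)
    (p q s : Fin d → ℝ)
    (hp : (∀ i, 0 ≤ p i) ∧ ∑ i, p i = 1) (hq : (∀ i, 0 ≤ q i) ∧ ∑ i, q i = 1)
    (hs : (∀ i, 0 ≤ s i) ∧ ∑ i, s i = 1)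
    (hpconv : ∀ i : Fin d, Tendsto (fun j => (lam j i : ℝ) / (kseq j : ℝ)) atTop (nhds (p i)))
    (hqconv : ∀ i : Fin d, Tendsto (fun j => (mu j i : ℝ) / (kseq j : ℝ)) atTop (nhds (q i)))
    (hsconv : ∀ i : Fin d, Tendsto (fun j => (nu j i : ℝ) / (kseq j : ℝ)) atTop (nhds (s i)))
    (hg0 : ∀ j, g (kseq j) (lam j) (mu j) (nu j) ≠ 0) :
    -(∑ i, p i * Real.log (p i)) ≤
      -(∑ i, q i * Real.log (q i)) + -(∑ i, s i * Real.log (s i)) := by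
  have hlim : ∀ (l : ℕ → ℕ → ℕ) (x : Fin d → ℝ),
      (∀ i : Fin d, Tendsto (fun j => (l j i : ℝ) / (kseq j : ℝ)) atTop (nhds (x i))) →
      Tendsto (fun j => -∑ i : Fin d, ((l j i : ℝ) / (kseq j : ℝ)) *
        Real.log ((l j i : ℝ) / (kseq j : ℝ))) atTop (nhds (-∑ i, x i * Real.log (x i))) := by
    intro l x hx
    refine (tendsto_finsetSum _ fun i _ => ?_).neg
    exact (Real.continuous_mul_log.tendsto (x i)).comp (hx i)
  refine le_of_tendsto_of_tendsto (hlim lam p hpconv)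
    ((hlim mu q hqconv).add (hlim nu s hsconv)) ?_
  filter_upwards [hkseq.eventually_gt_atTop 0] with j hj
  have hfin := finite_ineq (hlam j).1 (hlam j).2 (hmu j).1 (hmu j).2 (hnu j).1 (hnu j).2
    chi hchi g hg (hg0 j)
  rw [entropy_norm hj (hlam j).1 (hlam j).2, entropy_norm hj (hmu j).1 (hmu j).2,
    entropy_norm hj (hnu j).1 (hnu j).2]
  have hk : (0 : ℝ) < kseq j := by exact_mod_cast hj
  have h2 := div_le_div_of_nonneg_right hfin hk.le
  rw [add_div, add_div, mul_div_cancel_left₀ _ hk.ne'] at h2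
  linarith

end
end
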